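/- arXiv:1502.01288 — 2 statements merged into one kernel-verified Lean document; each statement's English description precedes it below -/
import Mathlib

section
/- Let ℓ be an odd prime and let G be a subgroup of GL₂(F_ℓ) such that every element of G lies in a conjugate of the nonsplit Cartan subgroup C_ns (equivalently, each element is scalar or has irreducible characteristic polynomial). Then one of the following holds: (0) G is contained in a conjugate of C_ns; (1) G is contained in a conjugate of N_ns; (2) the image H of G in PGL₂(F_ℓ) is isomorphic to A₄ and ℓ ≡ 11 (mod 12); (3) H is isomorphic to S₄ and ℓ ≡ 23 (mod 24); (4) H is isomorphic to A₅ and ℓ ≡ 59 (mod 60). -/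
open Matrix

abbrev GL2 (ℓ : ℕ) : Type := GL (Fin 2) (ZMod ℓ)

/-- The underlying matrix of an element of `GL₂(F_ℓ)`. -/
def mat {ℓ : ℕ} (g : GL2 ℓ) : Matrix (Fin 2) (Fin 2) (ZMod ℓ) := g

/-- `g` is a diagonal matrix. -/
def IsDiag {ℓ : ℕ} (g : GL2 ℓ) : Prop := mat g 0 1 = 0 ∧ mat g 1 0 = 0

/-- `g` is an antidiagonal matrix. -/
def IsAnti {ℓ : ℕ} (g : GL2 ℓ) : Prop := mat g 0 0 = 0 ∧ mat g 1 1 = 0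

/-- `g` is a scalar matrix. -/
def IsScalar {ℓ : ℕ} (g : GL2 ℓ) : Prop :=
  ∃ c : ZMod ℓ, mat g = c • (1 : Matrix (Fin 2) (Fin 2) (ZMod ℓ))

/-- Membership in the split Cartan subgroup `C_sp` (the diagonal matrices). -/
def InCsp {ℓ : ℕ} (g : GL2 ℓ) : Prop := IsDiag g

/-- Membership in the normalizer `N_sp` of the split Cartan (diagonal or antidiagonal). -/
def InNsp {ℓ : ℕ} (g : GL2 ℓ) : Prop := IsDiag g ∨ IsAnti g

/-- Membership in the nonsplit Cartan `C_ns` w.r.t. the nonresidue `δ`: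
matrices of the form `[[a, δb], [b, a]]`. -/
def InCns {ℓ : ℕ} (δ : ZMod ℓ) (g : GL2 ℓ) : Prop :=
  mat g 1 1 = mat g 0 0 ∧ mat g 0 1 = δ * mat g 1 0

/-- Membership in `N_ns \ C_ns` (as a matrix shape): `[[a, -δb], [b, -a]]`. -/
def InNnsAnti {ℓ : ℕ} (δ : ZMod ℓ) (g : GL2 ℓ) : Prop :=
  mat g 1 1 = - mat g 0 0 ∧ mat g 0 1 = - (δ * mat g 1 0)

/-- Membership in the normalizer `N_ns` of the nonsplit Cartan. -/
def InNns {ℓ : ℕ} (δ : ZMod ℓ) (g : GL2 ℓ) : Prop := InCns δ g ∨ InNnsAnti δ g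

/-- `PGL₂(F_ℓ)`: the quotient of `GL₂(F_ℓ)` by its center (the scalar matrices). -/
abbrev PGL2 (ℓ : ℕ) : Type := GL2 ℓ ⧸ Subgroup.center (GL2 ℓ)

/-- The natural projection `GL₂(F_ℓ) →* PGL₂(F_ℓ)`. -/
def toPGL (ℓ : ℕ) : GL2 ℓ →* PGL2 ℓ := QuotientGroup.mk' _

/-- The image of a subgroup of `GL₂(F_ℓ)` in `PGL₂(F_ℓ)`. -/
def projImage {ℓ : ℕ} (G : Subgroup (GL2 ℓ)) : Subgroup (PGL2 ℓ) := G.map (toPGL ℓ)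

/-- `H` is isomorphic to the alternating group `A₄`. -/
def IsA4 {ℓ : ℕ} (H : Subgroup (PGL2 ℓ)) : Prop := Nonempty (H ≃* alternatingGroup (Fin 4))

/-- `H` is isomorphic to the symmetric group `S₄`. -/
def IsS4 {ℓ : ℕ} (H : Subgroup (PGL2 ℓ)) : Prop := Nonempty (H ≃* Equiv.Perm (Fin 4))

/-- `H` is isomorphic to the alternating group `A₅`. -/
def IsA5 {ℓ : ℕ} (H : Subgroup (PGL2 ℓ)) : Prop := Nonempty (H ≃* alternatingGroup (Fin 5))


set_option linter.unusedSectionVars false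
set_option linter.unusedSimpArgs false

namespace NSC
open MulAction

structure TorusData (H X : Type*) [Group H] [MulAction H X] where
  T : X → Subgroup H
  ex : ∀ h : H, h ≠ 1 → ∃ x, h ∈ T x
  uniq : ∀ (h : H) (x y : X), h ≠ 1 → h ∈ T x → h ∈ T y → x = y
  ne : ∀ x, ∃ h ∈ T x, h ≠ 1
  conj : ∀ (g h : H) (x : X), h ∈ T x → g * h * g⁻¹ ∈ T (g • x)
  inv : ∀ (g : H) (x : X), g • x = x → g ∉ T x → g * g = 1
  idx : ∀ (g g' : H) (x : X), g • x = x → g' • x = x → g ∉ T x → g' ∉ T x → g * g' ∈ T x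

variable {H X : Type*} [Group H] [MulAction H X] [Finite H] [Finite X] (D : TorusData H X)

namespace TorusData

lemma le_stab (x : X) : D.T x ≤ stabilizer H x := by
  intro g hg
  rw [mem_stabilizer_iff]
  by_cases h1 : g = 1
  · simp [h1]
  · have := D.conj g g x hg
    rw [mul_inv_cancel_right] at this
    exact (D.uniq g x _ h1 hg this).symm

lemma mem_smul (g h : H) (x : X) : h ∈ D.T (g • x) ↔ g⁻¹ * h * g ∈ D.T x := by
  constructor
  · intro hh
    have := D.conj g⁻¹ h (g • x) hh
    simpa using this
  · intro hh
    have := D.conj g _ x hh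
    simpa [mul_assoc] using this

noncomputable def c (x : X) : ℕ := Nat.card (D.T x)
noncomputable def e (x : X) : ℕ := (D.T x).relIndex (stabilizer H x)
noncomputable def m (H : Type*) {X : Type*} [Group H] [MulAction H X] (x : X) : ℕ := Nat.card (orbit H x)

lemma c_ge (x : X) : 2 ≤ D.c x := by
  obtain ⟨h, hh, h1⟩ := D.ne x
  have : Nontrivial (D.T x) := ⟨⟨h, hh⟩, 1, by simpa [Subtype.ext_iff] using h1⟩
  exact Finite.one_lt_card

lemma c_smul (g : H) (x : X) : D.c (g • x) = D.c x := by
  unfold c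
  refine Nat.card_congr ((MulAut.conj g⁻¹).toEquiv.subtypeEquiv ?_)
  intro a
  have := D.mem_smul g a x
  simpa using this

lemma card_stab (x : X) : Nat.card (stabilizer H x) = D.c x * D.e x := by
  unfold c e
  have := Subgroup.card_mul_index ((D.T x).subgroupOf (stabilizer H x))
  rw [Nat.card_congr (Subgroup.subgroupOfEquivOfLe (D.le_stab x)).toEquiv] at this
  exact this.symm

lemma e_le (x : X) : D.e x = 1 ∨ D.e x = 2 := by
  by_cases h : stabilizer H x ≤ D.T x
  · left; exact Subgroup.relIndex_eq_one.2 h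
  · right
    obtain ⟨a, ha, ha'⟩ := Set.not_subset.1 h
    unfold e Subgroup.relIndex
    rw [Subgroup.index_eq_two_iff]
    refine ⟨⟨a, ha⟩, ?_⟩
    rintro ⟨b, hb⟩
    simp only [Subgroup.mem_subgroupOf, Subgroup.coe_mul]
    by_cases hbT : b ∈ D.T x
    · right
      refine ⟨hbT, fun hc => ha' ?_⟩
      simpa using (Subgroup.mul_mem_cancel_left _ hbT).1 hc
    · left
      refine ⟨D.idx _ _ _ hb ha hbT ha', hbT⟩

lemma card_eq (x : X) : Nat.card H = m H x * D.c x * D.e x := by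
  rw [mul_assoc, ← D.card_stab, m, ← Nat.card_prod]
  exact Nat.card_congr (orbitProdStabilizerEquivGroup H x).symm

lemma m_smul (g : H) (x : X) : m H (g • x) = m H x := by
  unfold m; rw [orbit_smul]

lemma sum_eq [Fintype X] : Nat.card H = 1 + ∑ x : X, (D.c x - 1) := by
  classical
  have := Fintype.ofFinite H
  have hone : Nat.card H = 1 + (Finset.univ.filter (fun h : H => h ≠ 1)).card := by
    rw [Finset.filter_ne', Finset.card_erase_of_mem (Finset.mem_univ _), Finset.card_univ,
      Nat.card_eq_fintype_card]
    have := Fintype.card_pos (α := H)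
    omega
  rw [hone]
  have hf : ∀ h : H, ∃ S : Finset X, ∀ x, x ∈ S ↔ h ∈ D.T x := fun h => ⟨Finset.univ.filter (fun x => h ∈ D.T x), by simp⟩
  congr 1
  have h2 : (Finset.univ.filter (fun h : H => h ≠ 1)) =
      Finset.univ.biUnion (fun x : X => Finset.univ.filter (fun h : H => h ∈ D.T x ∧ h ≠ 1)) := by
    ext h
    simp only [Finset.mem_filter, Finset.mem_univ, true_and, Finset.mem_biUnion]
    constructor
    · intro h1
      obtain ⟨x, hx⟩ := D.ex h h1
      exact ⟨x, hx, h1⟩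
    · rintro ⟨_, _, h⟩; exact h
  rw [h2, Finset.card_biUnion]
  · refine Finset.sum_congr rfl fun x _ => ?_
    have h3 : (Finset.univ.filter (fun h : H => h ∈ D.T x ∧ h ≠ 1)) =
      (Finset.univ.filter (fun h : H => h ∈ D.T x)).erase 1 := by
      ext h; simp [and_comm]
    rw [h3, Finset.card_erase_of_mem (by simp [one_mem])]
    unfold c
    rw [Nat.card_eq_fintype_card, Fintype.card_subtype]
  · intro x _ y _ hxy
    rw [Function.onFun, Finset.disjoint_left]
    intro h hx hy
    simp only [Finset.mem_filter, Finset.mem_univ, true_and] at hx hy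
    exact hxy (D.uniq h x y hx.2 hx.1 hy.1)

lemma sum_orb [Fintype (orbitRel.Quotient H X)] : 
    Nat.card H = 1 + ∑ w : orbitRel.Quotient H X, m H w.out * (D.c w.out - 1) := by
  classical
  have := Fintype.ofFinite X
  rw [D.sum_eq]
  congr 1
  rw [← Finset.sum_fiberwise (s := Finset.univ) (g := fun x : X => (Quotient.mk'' x : orbitRel.Quotient H X))]
  refine Finset.sum_congr rfl fun w _ => ?_
  have key : ∀ x : X, (Quotient.mk'' x : orbitRel.Quotient H X) = w ↔ x ∈ orbit H w.out := by
    intro x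
    conv_lhs => rw [← Quotient.out_eq' w]
    rw [Quotient.eq'']
    exact orbitRel_apply
  rw [Finset.sum_congr rfl (g := fun _ => D.c w.out - 1), Finset.sum_const, smul_eq_mul]
  · congr 1
    unfold m
    rw [Nat.card_eq_fintype_card, Fintype.card_subtype]
    congr 1
    ext x
    simp [key]
  · intro x hx
    simp only [Finset.mem_filter, Finset.mem_univ, true_and, key] at hx
    obtain ⟨g, rfl⟩ := hx
    simp only [D.c_smul]

/-- faithful action on the orbit of an odd torus -/
lemma faithful (x : X) (hodd : ∀ h ∈ D.T x, h * h = 1 → h = 1) (hm : ∃ g : H, g • x ≠ x) :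
    Function.Injective (toPermHom H (orbit H x)) := by
  rw [injective_iff_map_eq_one]
  have hfix : ∀ h : H, toPermHom H (orbit H x) h = 1 → ∀ g : H, h • (g • x) = g • x := by
    intro h hh g
    have := congrArg (fun σ : Equiv.Perm (orbit H x) => (σ ⟨g • x, mem_orbit x g⟩ : X)) hh
    simpa using this
  have first : ∀ h : H, toPermHom H (orbit H x) h = 1 → h ∈ D.T x → h = 1 := by
    intro h hh hx
    obtain ⟨g, hg⟩ := hm
    by_contra h1
    have h2 := hfix h hh g
    by_cases h3 : h ∈ D.T (g • x)
    · exact hg (D.uniq h x _ h1 hx h3).symm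
    · exact h1 (hodd h hx (D.inv _ _ h2 h3))
  intro h hh
  by_cases hx : h ∈ D.T x
  · exact first h hh hx
  exfalso
  have hst : h • x = x := by simpa using hfix h hh 1
  obtain ⟨t, ht, ht1⟩ := D.ne x
  have htx : t • x = x := D.le_stab x ht
  have h2 : h * h = 1 := D.inv h x hst hx
  have h3 : (h * t) * (h * t) = 1 := by
    refine D.inv _ x (by rw [mul_smul, htx, hst]) (fun hc => hx ?_)
    exact (Subgroup.mul_mem_cancel_right _ ht).1 hc
  have h4 : t * h * t⁻¹ * h⁻¹ = t * t := by
    have hi : h⁻¹ = h := inv_eq_of_mul_eq_one_right h2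
    have : h * t⁻¹ * h⁻¹ = t := by
      rw [hi]
      have : (h * t * h) * t = 1 := by simpa [mul_assoc] using h3
      have h5 : t⁻¹ = h * t * h := (eq_inv_of_mul_eq_one_left this).symm
      rw [h5]
      calc h * (h * t * h) * h = (h * h) * t * (h * h) := by group
        _ = t := by rw [h2]; simp
    calc t * h * t⁻¹ * h⁻¹ = t * (h * t⁻¹ * h⁻¹) := by group
      _ = t * t := by rw [this]
  have h5 : toPermHom H (orbit H x) (t * t) = 1 := by
    rw [← h4]; simp only [map_mul, map_inv, hh]; simp
  exact ht1 (hodd t ht (first _ h5 (mul_mem ht ht)))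

end TorusData

lemma iso_alt {k : ℕ} {Y : Type*} (hY : Nat.card Y = k) (hk : 2 ≤ k) (f : H →* Equiv.Perm Y)
    (hf : Function.Injective f) (hc : 2 * Nat.card H = k.factorial) :
    Nonempty (H ≃* alternatingGroup (Fin k)) := by
  have : Finite Y := Nat.finite_of_card_ne_zero (by omega)
  let ε : Y ≃ Fin k := (Finite.equivFinOfCardEq hY)
  let f' : H →* Equiv.Perm (Fin k) := (ε.permCongrHom.toMonoidHom).comp f
  have hf' : Function.Injective f' := ε.permCongrHom.injective.comp hf
  have hr : Nat.card f'.range = Nat.card H :=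
    Nat.card_congr (MonoidHom.ofInjective hf').symm.toEquiv
  have hi : f'.range.index = 2 := by
    have := Subgroup.card_mul_index f'.range
    rw [hr, Nat.card_eq_fintype_card (α := Equiv.Perm (Fin k)), Fintype.card_perm, Fintype.card_fin, ← hc] at this
    have h0 : 0 < Nat.card H := Nat.card_pos
    nlinarith
  have h1 := Equiv.Perm.eq_alternatingGroup_of_index_eq_two hi
  exact ⟨(MonoidHom.ofInjective hf').trans (MulEquiv.subgroupCongr h1)⟩

lemma iso_perm {k : ℕ} {Y : Type*} (hY : Nat.card Y = k) (hk : 2 ≤ k) (f : H →* Equiv.Perm Y)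
    (hf : Function.Injective f) (hc : Nat.card H = k.factorial) :
    Nonempty (H ≃* Equiv.Perm (Fin k)) := by
  have : Finite Y := Nat.finite_of_card_ne_zero (by omega)
  let ε : Y ≃ Fin k := (Finite.equivFinOfCardEq hY)
  let f' : H →* Equiv.Perm (Fin k) := (ε.permCongrHom.toMonoidHom).comp f
  have hf' : Function.Injective f' := ε.permCongrHom.injective.comp hf
  have hb : Function.Bijective f' := by
    rw [Nat.bijective_iff_injective_and_card]
    refine ⟨hf', ?_⟩
    rw [hc, Nat.card_eq_fintype_card (α := Equiv.Perm (Fin k)), Fintype.card_perm, Fintype.card_fin]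
  exact ⟨MulEquiv.ofBijective f' hb⟩

end NSC

namespace NSC
open MulAction
variable {H X : Type*} [Group H] [MulAction H X] [Finite H] [Finite X] (D : TorusData H X)
namespace TorusData

lemma a5 (hn : Nat.card H = 60) (x0 : X) (hc : D.c x0 = 2) (he : D.e x0 = 2)
    (hinv : ∀ h : H, h ≠ 1 → h * h = 1 → ∃ g : H, h ∈ D.T (g • x0)) :
    Nonempty (H ≃* alternatingGroup (Fin 5)) := by
  classical
  have := Fintype.ofFinite H
  have hm : m H x0 = 15 := by
    have := D.card_eq x0
    rw [hn, hc, he] at this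
    omega
  have hst : ∀ g : H, Nat.card (stabilizer H (g • x0)) = 4 := by
    intro g
    have h1 := D.card_eq (g • x0)
    rw [hn, m_smul, hm, mul_assoc, ← D.card_stab] at h1
    omega
  have htwo : ∀ (g a b : H), a ∈ D.T (g • x0) → b ∈ D.T (g • x0) → a ≠ 1 → b ≠ 1 → a = b := by
    intro g a b ha hb ha1 hb1
    have h2 : Nat.card (D.T (g • x0)) = 2 := by
      have := D.c_smul g x0
      rw [hc] at this; exact this
    rw [Nat.card_eq_two_iff' (1 : D.T (g • x0))] at h2
    obtain ⟨y, _, hy⟩ := h2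
    have e1 := hy ⟨a, ha⟩ (by simpa [Subtype.ext_iff] using ha1)
    have e2 := hy ⟨b, hb⟩ (by simpa [Subtype.ext_iff] using hb1)
    exact congrArg Subtype.val (e1.trans e2.symm)
  have hexpT : ∀ (g h : H), h ∈ D.T (g • x0) → h * h = 1 := by
    intro g h hh
    by_contra hne
    have h1 : h ≠ 1 := by rintro rfl; simp at hne
    have := htwo g h (h * h) hh (mul_mem hh hh) h1 hne
    exact h1 (by simpa using this)
  have hexp : ∀ (g h : H), h ∈ stabilizer H (g • x0) → h * h = 1 := by
    intro g h hh
    by_cases h1 : h ∈ D.T (g • x0)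
    · exact hexpT g h h1
    · exact D.inv _ _ hh h1
  have hfac : (Nat.card H).factorization 2 = 2 := by
    rw [hn]
    have : (60 : ℕ) = 2 ^ 2 * 15 := by norm_num
    rw [this]
    rw [Nat.factorization_mul (by norm_num) (by norm_num), Nat.factorization_pow]
    simp [Nat.prime_two, Nat.factorization_eq_zero_of_not_dvd (show ¬ 2 ∣ 15 by norm_num)]
  let P : H → Sylow 2 H := fun g => Sylow.ofCard (stabilizer H (g • x0)) (by rw [hst, hfac]; rfl)
  have hP : ∀ g h, h ∈ P g ↔ h ∈ stabilizer H (g • x0) := fun g h => Iff.rfl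
  have hPall : ∀ Q : Sylow 2 H, ∃ g, Q = P g := by
    intro Q
    obtain ⟨g, rfl⟩ := exists_smul_eq H (P 1) Q
    refine ⟨g, ?_⟩
    apply Sylow.ext
    rw [Sylow.coe_subgroup_smul]
    have h1 : ((P 1 : Sylow 2 H) : Subgroup H) = stabilizer H x0 := by
      simp [P]
    have h2 : ((P g : Sylow 2 H) : Subgroup H) = stabilizer H (g • x0) := by
      simp [P]
    rw [h1, h2, stabilizer_smul_eq_stabilizer_map_conj]
    rfl
  have hinv' : ∀ h : H, ∃ g : H, h ≠ 1 → h * h = 1 → h ∈ D.T (g • x0) := by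
    intro h
    by_cases h1 : h ≠ 1 ∧ h * h = 1
    · obtain ⟨g, hg⟩ := hinv h h1.1 h1.2
      exact ⟨g, fun _ _ => hg⟩
    · exact ⟨1, fun a b => absurd ⟨a, b⟩ h1⟩
  choose γ hγ using hinv'
  let I : Finset H := Finset.univ.filter (fun h => h ≠ 1 ∧ h * h = 1)
  have memI : ∀ h, h ∈ I ↔ h ≠ 1 ∧ h * h = 1 := fun h => by simp [I]
  have hI : I.card = 15 := by
    have hIc : Nat.card I = I.card := by simp
    rw [← hm, m, ← hIc]
    refine Nat.card_congr (Equiv.ofBijective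
      (fun h => (⟨γ h • x0, mem_orbit x0 _⟩ : orbit H x0)) ⟨?_, ?_⟩)
    · rintro ⟨a, ha⟩ ⟨b, hb⟩ hab
      have ha := (memI a).1 ha
      have hb := (memI b).1 hb
      simp only [Subtype.mk.injEq] at hab ⊢
      have h1 := hγ a ha.1 ha.2
      have h2 := hγ b hb.1 hb.2
      rw [← hab] at h2
      exact htwo _ _ _ h1 h2 ha.1 hb.1
    · rintro ⟨_, g, rfl⟩
      obtain ⟨h, hh, h1⟩ := D.ne (g • x0)
      have h2 := hexpT g h hh
      refine ⟨⟨h, (memI h).2 ⟨h1, h2⟩⟩, ?_⟩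
      apply Subtype.ext
      exact D.uniq h _ _ h1 (hγ h h1 h2) hh
  have hfib : ∀ (h : H), h ∈ I → ∀ Q : Sylow 2 H, P (γ h) = Q ↔ h ∈ Q := by
    intro h hh Q
    have hh := (memI h).1 hh
    have hT := hγ h hh.1 hh.2
    constructor
    · rintro rfl
      exact (hP _ _).2 (D.le_stab _ hT)
    · intro hQ
      obtain ⟨g, rfl⟩ := hPall Q
      have hle : stabilizer H (g • x0) ≤ stabilizer H (γ h • x0) := by
        intro k hk
        have e1 := hexp g k hk
        have e2 := hexp g h ((hP _ _).1 hQ)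
        have e3 := hexp g (k * h) (mul_mem hk ((hP _ _).1 hQ))
        have i1 : k⁻¹ = k := inv_eq_of_mul_eq_one_right e1
        have i2 : h⁻¹ = h := inv_eq_of_mul_eq_one_right e2
        have e4 : k * h * k⁻¹ = h := by
          rw [i1]
          have : (k * h * k) * h = 1 := by rw [← e3]; group
          rw [← i2]
          rw [i2]
          exact (eq_inv_of_mul_eq_one_left this).trans i2
        have := D.conj k h _ hT
        rw [e4] at this
        exact (D.uniq h _ _ hh.1 hT this).symm
      have heq := Subgroup.eq_of_le_of_card_ge hle (by rw [hst, hst])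
      apply Sylow.ext
      exact heq.symm
  have hcardQ : ∀ Q : Sylow 2 H, (I.filter (fun h => P (γ h) = Q)).card = 3 := by
    intro Q
    have h1 : I.filter (fun h => P (γ h) = Q) = (Finset.univ.filter (fun h => h ∈ Q)).erase 1 := by
      ext h
      simp only [Finset.mem_filter, Finset.mem_erase, Finset.mem_univ, true_and]
      constructor
      · rintro ⟨a, b⟩
        exact ⟨((memI h).1 a).1, (hfib h a Q).1 b⟩
      · rintro ⟨a, b⟩
        have : h ∈ I := by
          rw [memI]
          refine ⟨a, ?_⟩
          obtain ⟨g, rfl⟩ := hPall Q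
          exact hexp g h ((hP _ _).1 b)
        exact ⟨this, (hfib h this Q).2 b⟩
    rw [h1, Finset.card_erase_of_mem (by simp [one_mem])]
    have h2 : Nat.card Q = 4 := by
      obtain ⟨g, rfl⟩ := hPall Q
      exact hst g
    rw [Nat.card_eq_fintype_card, Fintype.card_subtype] at h2
    have h3 : (Finset.univ.filter (fun h => h ∈ Q)).card = 4 := h2
    rw [h3]
  have hS : Nat.card (Sylow 2 H) = 5 := by
    have := Fintype.ofFinite (Sylow 2 H)
    have h1 := Finset.card_eq_sum_card_fiberwise (s := I) (t := Finset.univ)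
      (f := fun h => P (γ h)) (fun _ _ => by simp)
    rw [Finset.sum_congr rfl (fun Q _ => hcardQ Q), Finset.sum_const, hI, Finset.card_univ, smul_eq_mul] at h1
    rw [Nat.card_eq_fintype_card]
    omega
  refine iso_alt hS (by norm_num) (toPermHom H (Sylow 2 H)) ?_ (by rw [hn]; rfl)
  rw [← MonoidHom.ker_eq_bot_iff, Subgroup.eq_bot_iff_forall]
  intro h hh
  by_contra h1
  set K := (toPermHom H (Sylow 2 H)).ker with hK
  have hKfix : ∀ k ∈ K, ∀ Q : Sylow 2 H, k • Q = Q := by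
    intro k hk Q
    have := congrArg (fun σ : Equiv.Perm (Sylow 2 H) => σ Q) (MonoidHom.mem_ker.1 hk)
    simpa using this
  have step1 : ∃ u ∈ K, u ≠ 1 ∧ u * u = 1 := by
    by_cases h2 : h * h = 1
    · exact ⟨h, hh, h1, h2⟩
    obtain ⟨t, ht, ht1⟩ := D.ne ((1 : H) • x0)
    have htP : t ∈ P 1 := (hP _ _).2 (D.le_stab _ ht)
    have hu : h * t * h⁻¹ * t⁻¹ ∈ P 1 := by
      refine mul_mem ?_ (inv_mem htP)
      have h3 := hKfix h hh (P 1)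
      rw [← h3]
      change h * t * h⁻¹ ∈ ((h • P 1 : Sylow 2 H) : Subgroup H)
      rw [Sylow.coe_subgroup_smul]
      exact ⟨t, htP, by simp⟩
    refine ⟨h * t * h⁻¹ * t⁻¹, ?_, ?_, hexp 1 _ ((hP _ _).1 hu)⟩
    · have : t * h⁻¹ * t⁻¹ ∈ K := (inferInstance : K.Normal).conj_mem _ (inv_mem hh) t
      have := mul_mem hh this
      simpa [mul_assoc] using this
    · intro h3
      have h4 : h * t * h⁻¹ = t := mul_inv_eq_one.1 h3
      have h5 := D.conj h t _ ht
      rw [h4] at h5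
      have h6 := (D.uniq t _ _ ht1 ht h5).symm
      exact h2 (hexp 1 h h6)
  obtain ⟨u, hu, hu1, hu2⟩ := step1
  have step2 : ∀ v ∈ I, v ∈ K := by
    intro v hv
    have hv := (memI v).1 hv
    have e1 := hγ u hu1 hu2
    have e2 := hγ v hv.1 hv.2
    have e3 := D.conj (γ v * (γ u)⁻¹) u _ e1
    rw [mul_smul, inv_smul_smul] at e3
    rw [← htwo _ _ _ e3 e2 (fun hc => hu1 (conj_eq_one_iff.1 hc)) hv.1]
    exact (inferInstance : K.Normal).conj_mem _ hu _
  have h16 : 16 ≤ Nat.card K := by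
    have e1 : insert 1 I ⊆ Finset.univ.filter (fun h => h ∈ K) := by
      intro v hv
      rw [Finset.mem_insert] at hv
      rcases hv with rfl | hv
      · simp [one_mem]
      · simpa using step2 v hv
    have e2 := Finset.card_le_card e1
    rw [Finset.card_insert_of_notMem (by simp [memI]), hI] at e2
    rw [Nat.card_eq_fintype_card, Fintype.card_subtype]
    exact e2
  have hle : K ≤ stabilizer H (P 1) := fun k hk => hKfix k hk _
  have e1 := Nat.le_of_dvd Nat.card_pos (Subgroup.card_dvd_of_le hle)
  have e2 := Subgroup.card_mul_index (stabilizer H (P 1))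
  rw [index_stabilizer_of_transitive, hS, hn] at e2
  omega

end TorusData
end NSC

namespace NSC
open MulAction
variable {H X : Type*} [Group H] [MulAction H X] [Finite H] [Finite X] (D : TorusData H X)

lemma mc_bound {N m c k : ℕ} (h : N = m * c) (hc : k ≤ c) : k * m ≤ N := by
  rw [h, mul_comm m c]; exact Nat.mul_le_mul_right _ hc

lemma num2 {n m1 c1 m2 c2 e1 e2 : ℕ} (h1 : n = m1 * c1 * e1) (h2 : n = m2 * c2 * e2)
    (hm1 : 2 ≤ m1) (hm2 : 2 ≤ m2) (hc1 : 2 ≤ c1) (hc2 : 2 ≤ c2)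
    (he1 : e1 = 1 ∨ e1 = 2) (he2 : e2 = 1 ∨ e2 = 2)
    (hs : n = 1 + (m1 * (c1 - 1) + m2 * (c2 - 1))) :
    n = 12 ∧ ((c1 = 3 ∧ m1 = 4) ∨ (c2 = 3 ∧ m2 = 4)) := by
  have key1 : m1 * (c1 - 1) + m1 = m1 * c1 := by
    obtain ⟨k, rfl⟩ := Nat.exists_eq_add_of_le' hc1
    simp; ring
  have key2 : m2 * (c2 - 1) + m2 = m2 * c2 := by
    obtain ⟨k, rfl⟩ := Nat.exists_eq_add_of_le' hc2
    simp; ring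
  have b1 := mc_bound (rfl : m1 * c1 = m1 * c1) hc1
  have b2 := mc_bound (rfl : m2 * c2 = m2 * c2) hc2
  have aux : ∀ {m1 c1 m2 c2 N : ℕ}, 2 ≤ m1 → 2 ≤ m2 → 2 ≤ c1 → 2 ≤ c2 → m1 * c1 = 2 * N →
      m2 * c2 = N → m1 + m2 = N + 1 → N = 6 ∧ c1 = 3 ∧ m1 = 4 := by
    intro m1 c1 m2 c2 N hm1 hm2 hc1 hc2 h1 h2 hs
    have b1 := mc_bound (rfl : m1 * c1 = m1 * c1) hc1
    have b2 := mc_bound (rfl : m2 * c2 = m2 * c2) hc2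
    by_cases h4 : 4 ≤ c1
    · have := mc_bound (rfl : m1 * c1 = m1 * c1) h4
      omega
    by_cases h3 : 3 ≤ c2
    · have := mc_bound (rfl : m2 * c2 = m2 * c2) h3
      have : c1 = 2 ∨ c1 = 3 := by omega
      rcases this with rfl | rfl <;> omega
    have : c2 = 2 := by omega
    subst this
    have : c1 = 2 ∨ c1 = 3 := by omega
    rcases this with rfl | rfl <;> omega
  rcases he1 with rfl | rfl <;> rcases he2 with rfl | rfl
  · omega
  · obtain ⟨a, b, c⟩ := aux (N := m2 * c2) hm1 hm2 hc1 hc2 (by omega) (by omega) (by omega)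
    omega
  · obtain ⟨a, b, c⟩ := aux (N := m1 * c1) hm2 hm1 hc2 hc1 (by omega) (by omega) (by omega)
    omega
  · omega

lemma num3 {n m1 c1 m2 c2 m3 c3 e1 e2 e3 : ℕ} (h1 : n = m1 * c1 * e1) (h2 : n = m2 * c2 * e2)
    (h3 : n = m3 * c3 * e3)
    (hm1 : 2 ≤ m1) (hm2 : 2 ≤ m2) (hm3 : 2 ≤ m3) (hc1 : 2 ≤ c1) (h12 : c1 ≤ c2) (h23 : c2 ≤ c3)
    (he1 : e1 = 1 ∨ e1 = 2) (he2 : e2 = 1 ∨ e2 = 2) (he3 : e3 = 1 ∨ e3 = 2)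
    (hs : n = 1 + (m1 * (c1 - 1) + (m2 * (c2 - 1) + m3 * (c3 - 1)))) :
    c1 = 2 ∧ c2 = 3 ∧ e1 = 2 ∧ ((n = 12 ∧ m2 = 2) ∨ (n = 24 ∧ m2 = 4) ∨ (n = 60 ∧ c3 = 5)) := by
  have hc2 : 2 ≤ c2 := by omega
  have hc3 : 2 ≤ c3 := by omega
  have key1 : m1 * (c1 - 1) + m1 = m1 * c1 := by
    obtain ⟨k, rfl⟩ := Nat.exists_eq_add_of_le' hc1
    simp; ring
  have key2 : m2 * (c2 - 1) + m2 = m2 * c2 := by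
    obtain ⟨k, rfl⟩ := Nat.exists_eq_add_of_le' hc2
    simp; ring
  have key3 : m3 * (c3 - 1) + m3 = m3 * c3 := by
    obtain ⟨k, rfl⟩ := Nat.exists_eq_add_of_le' hc3
    simp; ring
  have b1 := mc_bound (rfl : m1 * c1 = m1 * c1) hc1
  have b2 := mc_bound (rfl : m2 * c2 = m2 * c2) hc2
  have b3 := mc_bound (rfl : m3 * c3 = m3 * c3) hc3
  have he : e1 = 2 ∧ e2 = 2 ∧ e3 = 2 := by
    rcases he1 with rfl | rfl <;> rcases he2 with rfl | rfl <;> rcases he3 with rfl | rfl <;> omega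
  obtain ⟨rfl, rfl, rfl⟩ := he
  have hc1' : c1 = 2 := by
    by_contra hne
    have a1 := mc_bound (rfl : m1 * c1 = m1 * c1) (show 3 ≤ c1 by omega)
    have a2 := mc_bound (rfl : m2 * c2 = m2 * c2) (show 3 ≤ c2 by omega)
    have a3 := mc_bound (rfl : m3 * c3 = m3 * c3) (show 3 ≤ c3 by omega)
    omega
  subst hc1'
  have hc2' : c2 = 2 ∨ c2 = 3 := by
    by_contra hne
    have a2 := mc_bound (rfl : m2 * c2 = m2 * c2) (show 4 ≤ c2 by omega)
    have a3 := mc_bound (rfl : m3 * c3 = m3 * c3) (show 4 ≤ c3 by omega)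
    omega
  rcases hc2' with rfl | rfl
  · omega
  have hc3' : c3 = 3 ∨ c3 = 4 ∨ c3 = 5 := by
    by_contra hne
    have a3 := mc_bound (rfl : m3 * c3 = m3 * c3) (show 6 ≤ c3 by omega)
    omega
  rcases hc3' with rfl | rfl | rfl <;> omega

namespace TorusData

lemma odd_T (x : X) (h : D.c x = 3 ∨ D.c x = 5) : ∀ h ∈ D.T x, h * h = 1 → h = 1 := by
  intro t ht h2
  have h3 : t ^ (D.c x) = 1 := by
    have := pow_card_eq_one' (x := (⟨t, ht⟩ : D.T x))
    exact congrArg Subtype.val this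
  have h4 : t ^ 2 = 1 := by rw [pow_two, h2]
  have := pow_gcd_eq_one.2 ⟨h4, h3⟩
  rcases h with h | h <;> rw [h] at this <;> simpa using this

theorem classify {H X : Type*} [Group H] [MulAction H X] [Finite H] [Finite X]
    (D : TorusData H X) (hno : ∀ x : X, ∃ g : H, g • x ≠ x) :
    Nat.card H = 1 ∨
    (Nonempty (H ≃* alternatingGroup (Fin 4)) ∧ Nat.card H = 12) ∨
    (Nonempty (H ≃* Equiv.Perm (Fin 4)) ∧ Nat.card H = 24) ∨
    (Nonempty (H ≃* alternatingGroup (Fin 5)) ∧ Nat.card H = 60) := by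
  classical
  have : Fintype (orbitRel.Quotient H X) := Fintype.ofFinite _
  have hsum := D.sum_orb
  have hm : ∀ x : X, 2 ≤ m H x := by
    intro x
    obtain ⟨g, hg⟩ := hno x
    have : Nontrivial (orbit H x) := ⟨⟨g • x, mem_orbit x g⟩, ⟨x, mem_orbit_self x⟩,
      by simpa [Subtype.ext_iff] using hg⟩
    exact Finite.one_lt_card
  have hfaith : ∀ x : X, D.c x = 3 → Function.Injective (toPermHom H (orbit H x)) :=
    fun x hx => D.faithful x (D.odd_T x (Or.inl hx)) (hno x)
  have hpos : 0 < Nat.card H := Nat.card_pos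
  have hcard : Fintype.card (orbitRel.Quotient H X) ≤ 3 := by
    by_contra hlt
    have h1 : Fintype.card (orbitRel.Quotient H X) • Nat.card H ≤
        ∑ w : orbitRel.Quotient H X, 4 * (m H w.out * (D.c w.out - 1)) := by
      rw [← Finset.card_univ]
      refine Finset.card_nsmul_le_sum _ _ _ fun w _ => ?_
      have h1 := D.card_eq w.out
      have h2 := D.c_ge w.out
      obtain ⟨k, hk⟩ := Nat.exists_eq_add_of_le' h2
      rw [hk] at h1 ⊢
      rcases D.e_le w.out with h3 | h3 <;> rw [h3] at h1 <;> rw [h1]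
      · rw [show k + 2 - 1 = k + 1 by omega]; nlinarith [hm w.out]
      · rw [show k + 2 - 1 = k + 1 by omega]; nlinarith [hm w.out]
    rw [← Finset.mul_sum, smul_eq_mul] at h1
    have : 4 * Nat.card H ≤ Fintype.card (orbitRel.Quotient H X) * Nat.card H :=
      Nat.mul_le_mul_right _ (by omega)
    omega
  rw [← Finset.card_univ] at hcard
  have hcases : (Finset.univ : Finset (orbitRel.Quotient H X)).card = 0 ∨ (Finset.univ : Finset (orbitRel.Quotient H X)).card = 1 ∨ (Finset.univ : Finset (orbitRel.Quotient H X)).card = 2 ∨ (Finset.univ : Finset (orbitRel.Quotient H X)).card = 3 := by omega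
  rcases hcases with h0 | h0 | h0 | h0
  · left
    rw [Finset.card_eq_zero.1 h0] at hsum
    simpa using hsum
  · exfalso
    obtain ⟨w, hw⟩ := Finset.card_eq_one.1 h0
    rw [hw, Finset.sum_singleton] at hsum
    have h1 := D.card_eq w.out
    have h2 := D.c_ge w.out
    have h3 := hm w.out
    obtain ⟨k, hk⟩ := Nat.exists_eq_add_of_le' h2
    rw [hk] at h1 hsum
    rw [show k + 2 - 1 = k + 1 by omega] at hsum
    rcases D.e_le w.out with h3 | h3 <;> rw [h3] at h1 <;> nlinarith
  · right; left
    obtain ⟨w1, w2, hne, hw⟩ := Finset.card_eq_two.1 h0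
    rw [hw, Finset.sum_pair hne] at hsum
    obtain ⟨h12, h⟩ := num2 (D.card_eq w1.out) (D.card_eq w2.out) (hm _) (hm _) (D.c_ge _) (D.c_ge _)
      (D.e_le _) (D.e_le _) hsum
    refine ⟨?_, h12⟩
    rcases h with ⟨a, b⟩ | ⟨a, b⟩
    · exact iso_alt b (by norm_num) _ (hfaith _ a) (by rw [h12]; rfl)
    · exact iso_alt b (by norm_num) _ (hfaith _ a) (by rw [h12]; rfl)
  · obtain ⟨w1, w2, w3, n12, n13, n23, hw⟩ := Finset.card_eq_three.1 h0
    rw [hw, Finset.sum_insert (by simp [n12, n13]), Finset.sum_pair n23] at hsum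
    have hall : ∀ w, w = w1 ∨ w = w2 ∨ w = w3 := by
      intro w
      have := Finset.mem_univ w
      rw [hw] at this
      simpa using this
    clear hw n12 n13 n23 h0 hcard
    have main : ∀ w1 w2 w3 : orbitRel.Quotient H X, (∀ w, w = w1 ∨ w = w2 ∨ w = w3) →
        Nat.card H = 1 + (m H w1.out * (D.c w1.out - 1) + (m H w2.out * (D.c w2.out - 1) + m H w3.out * (D.c w3.out - 1))) →
        D.c w1.out ≤ D.c w2.out → D.c w2.out ≤ D.c w3.out → 
        (Nonempty (H ≃* Equiv.Perm (Fin 4)) ∧ Nat.card H = 24) ∨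
        (Nonempty (H ≃* alternatingGroup (Fin 5)) ∧ Nat.card H = 60) := by
      clear hsum hall w1 w2 w3
      intro w1 w2 w3 hall hsum h12 h23
      obtain ⟨c1, c2, e1, h⟩ := num3 (D.card_eq w1.out) (D.card_eq w2.out) (D.card_eq w3.out) (hm _)
        (hm _) (hm _) (D.c_ge _) h12 h23 (D.e_le _) (D.e_le _) (D.e_le _) hsum
      rcases h with ⟨hn, hh⟩ | ⟨hn, hh⟩ | ⟨hn, hh⟩
      · exfalso
        have h1 := Nat.card_le_card_of_injective _ (hfaith _ c2)
        rw [Nat.card_perm, hn] at h1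
        unfold m at hh
        rw [hh] at h1
        simp [Nat.factorial] at h1
      · left
        exact ⟨iso_perm hh (by norm_num) _ (hfaith _ c2) (by rw [hn]; rfl), hn⟩
      · right
        refine ⟨D.a5 hn w1.out c1 e1 ?_, hn⟩
        intro h hne h2
        obtain ⟨y, hy⟩ := D.ex h hne
        obtain ⟨g, hg⟩ : ∃ g : H, g • (Quotient.mk'' y : orbitRel.Quotient H X).out = y := by
          have := Quotient.out_eq' (Quotient.mk'' y : orbitRel.Quotient H X)
          rw [Quotient.eq''] at this
          exact (orbitRel_apply.1 (Setoid.symm' _ this))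
        have hcy := D.c_smul g (Quotient.mk'' y : orbitRel.Quotient H X).out
        rw [hg] at hcy
        rcases hall (Quotient.mk'' y) with hw | hw | hw <;> rw [hw] at hg hcy
        · exact ⟨g, by rw [hg]; exact hy⟩
        · exact absurd (D.odd_T y (Or.inl (by omega)) h hy h2) hne
        · exact absurd (D.odd_T y (Or.inr (by omega)) h hy h2) hne
    right; right
    rcases le_total (D.c w1.out) (D.c w2.out) with a | a <;>
    rcases le_total (D.c w2.out) (D.c w3.out) with b | b <;>
    rcases le_total (D.c w1.out) (D.c w3.out) with c | c
    · exact main w1 w2 w3 hall hsum a b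
    · exact main w1 w2 w3 hall hsum a b
    · exact main w1 w3 w2 (by intro w; have := hall w; tauto) (by omega) c b
    · exact main w3 w1 w2 (by intro w; have := hall w; tauto) (by omega) c a
    · exact main w2 w1 w3 (by intro w; have := hall w; tauto) (by omega) a c
    · exact main w2 w3 w1 (by intro w; have := hall w; tauto) (by omega) b c
    · exact main w3 w2 w1 (by intro w; have := hall w; tauto) (by omega) b a
    · exact main w3 w2 w1 (by intro w; have := hall w; tauto) (by omega) b a

end TorusData
end NSC

namespace NSC
open MulAction

section rel
variable {H : Type*} [Group H] (R : H → H → Prop)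

/-- The tori attached to a commutation-type relation. -/
def Tori : Type _ := {S : Subgroup H // ∃ a : H, a ≠ 1 ∧ ∀ b : H, b ∈ S ↔ R a b}

instance [Finite H] : Finite (Tori R) := by unfold Tori; infer_instance

lemma conj_map_mem (S : Subgroup H) (g b : H) :
    b ∈ S.map (MulAut.conj g).toMonoidHom ↔ g⁻¹ * b * g ∈ S := by
  constructor
  · rintro ⟨t, ht, rfl⟩
    simpa [mul_assoc] using ht
  · intro h
    exact ⟨_, h, by simp [mul_assoc]⟩

@[reducible]
def toriAction (conj : ∀ g a b, R a b → R (g * a * g⁻¹) (g * b * g⁻¹)) : MulAction H (Tori R) where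
  smul g S := ⟨S.1.map (MulAut.conj g).toMonoidHom, by
    obtain ⟨a, ha, hS⟩ := S.2
    refine ⟨g * a * g⁻¹, fun h => ha (conj_eq_one_iff.1 h), fun b => ?_⟩
    rw [conj_map_mem, hS]
    constructor
    · intro h
      simpa [mul_assoc] using conj g _ _ h
    · intro h
      simpa [mul_assoc] using conj g⁻¹ _ _ h⟩
  one_smul S := Subtype.ext (by
    change S.1.map _ = S.1
    ext b; rw [conj_map_mem]; simp)
  mul_smul g h S := Subtype.ext (by
    change S.1.map _ = (S.1.map _).map _
    ext b; simp only [conj_map_mem]; simp [mul_assoc])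

theorem classify_rel [Finite H] (refl : ∀ a, R a a) (symm : ∀ a b, R a b → R b a) (one : ∀ a, R a 1)
    (mul : ∀ a b c, R a b → R a c → R a (b * c)) (inv : ∀ a b, R a b → R a b⁻¹)
    (trans : ∀ a b c, b ≠ 1 → R a b → R b c → R a c)
    (conj : ∀ g a b, R a b → R (g * a * g⁻¹) (g * b * g⁻¹))
    (n1 : ∀ a g, a ≠ 1 → R a (g * a * g⁻¹) → R a g ∨ g * g = 1)
    (n2 : ∀ a g g', a ≠ 1 → R a (g * a * g⁻¹) → R a (g' * a * g'⁻¹) → ¬ R a g → ¬ R a g' →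
      R a (g * g')) :
    (Nat.card H = 1 ∨ ∃ a : H, a ≠ 1 ∧ ∀ g, R a (g * a * g⁻¹)) ∨
    (Nonempty (H ≃* alternatingGroup (Fin 4)) ∧ Nat.card H = 12) ∨
    (Nonempty (H ≃* Equiv.Perm (Fin 4)) ∧ Nat.card H = 24) ∨
    (Nonempty (H ≃* alternatingGroup (Fin 5)) ∧ Nat.card H = 60) := by
  let _ := toriAction R conj
  have hsm : ∀ (g b : H) (S : Tori R), b ∈ (g • S).1 ↔ g⁻¹ * b * g ∈ S.1 :=
    fun g b S => conj_map_mem S.1 g b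
  have hfix : ∀ (g a : H) (S : Tori R), (∀ b : H, b ∈ S.1 ↔ R a b) → g • S = S →
      R a (g * a * g⁻¹) := by
    intro g a S hS hg
    rw [← hS, ← hg, hsm, hS]
    simpa [mul_assoc] using refl a
  let D : TorusData H (Tori R) :=
    { T := fun S => S.1
      ex := fun h hh => ⟨⟨{ carrier := {b | R h b}
                            mul_mem' := fun {a b} => mul h a b
                            one_mem' := one h
                            inv_mem' := fun {a} => inv h a }, h, hh, fun _ => Iff.rfl⟩, refl h⟩
      uniq := by
        rintro h ⟨S, a, ha, hS⟩ ⟨S', a', ha', hS'⟩ hh h1 h2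
        apply Subtype.ext
        ext b
        change b ∈ S ↔ b ∈ S'
        have h1 := (hS h).1 h1
        have h2 := (hS' h).1 h2
        rw [hS, hS']
        constructor
        · intro h3
          exact trans _ _ _ hh h2 (trans _ _ _ ha (symm _ _ h1) h3)
        · intro h3
          exact trans _ _ _ hh h1 (trans _ _ _ ha' (symm _ _ h2) h3)
      ne := by
        rintro ⟨S, a, ha, hS⟩
        exact ⟨a, (hS a).2 (refl a), ha⟩
      conj := by
        intro g h S hh
        rw [hsm]
        simpa [mul_assoc] using hh
      inv := by
        intro g S hg hgS
        obtain ⟨a, ha, hS⟩ := S.2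
        rcases n1 a g ha (hfix g a S hS hg) with h | h
        · exact absurd ((hS g).2 h) hgS
        · exact h
      idx := by
        intro g g' S hg hg' hgS hgS'
        obtain ⟨a, ha, hS⟩ := S.2
        rw [hS] at hgS hgS' ⊢
        exact n2 a g g' ha (hfix g a S hS hg) (hfix g' a S hS hg') hgS hgS' }
  by_cases hno : ∀ x : Tori R, ∃ g : H, g • x ≠ x
  · rcases D.classify hno with h | h
    · exact Or.inl (Or.inl h)
    · exact Or.inr h
  · push Not at hno
    obtain ⟨S, hS⟩ := hno
    obtain ⟨a, ha, hSa⟩ := S.2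
    exact Or.inl (Or.inr ⟨a, ha, fun g => hfix g a S hSa (hS g)⟩)

end rel

section mats
variable {K : Type*} [Field K]

lemma comm_iff (A B : Matrix (Fin 2) (Fin 2) K) : A * B = B * A ↔
    A 0 1 * B 1 0 = B 0 1 * A 1 0 ∧ A 0 1 * (B 0 0 - B 1 1) = B 0 1 * (A 0 0 - A 1 1) ∧
      A 1 0 * (B 0 0 - B 1 1) = B 1 0 * (A 0 0 - A 1 1) := by
  constructor
  · intro h
    have h00 := congrFun (congrFun h 0) 0
    have h01 := congrFun (congrFun h 0) 1
    have h10 := congrFun (congrFun h 1) 0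
    simp only [Matrix.mul_apply, Fin.sum_univ_two] at h00 h01 h10
    refine ⟨?_, ?_, ?_⟩
    · linear_combination h00
    · linear_combination -h01
    · linear_combination h10
  · rintro ⟨h1, h2, h3⟩
    ext i j
    fin_cases i <;> fin_cases j <;> simp only [Matrix.mul_apply, Fin.sum_univ_two, Fin.zero_eta, Fin.mk_one, Fin.isValue]
    · linear_combination h1
    · linear_combination -h2
    · linear_combination h3
    · linear_combination -h1

def IsSc (A : Matrix (Fin 2) (Fin 2) K) : Prop := A 0 1 = 0 ∧ A 1 0 = 0 ∧ A 0 0 = A 1 1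

def disc (A : Matrix (Fin 2) (Fin 2) K) : K := A.trace ^ 2 - 4 * A.det

def dd (A : Matrix (Fin 2) (Fin 2) K) : Matrix (Fin 2) (Fin 2) K := (2 : K) • A - A.trace • 1

lemma comm_trans (A B C : Matrix (Fin 2) (Fin 2) K) (hB : ¬ IsSc B) (h1 : A * B = B * A)
    (h2 : B * C = C * B) : A * C = C * A := by
  rw [comm_iff] at *
  obtain ⟨p1, p2, p3⟩ := h1
  obtain ⟨q1, q2, q3⟩ := h2
  by_cases hb1 : B 0 1 = 0
  · by_cases hb2 : B 1 0 = 0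
    · have hb3 : B 0 0 - B 1 1 ≠ 0 := fun h => hB ⟨hb1, hb2, sub_eq_zero.1 h⟩
      simp only [hb1, hb2, zero_mul, mul_eq_zero, hb3, or_false] at p2 p3
      have q2' : C 0 1 = 0 := by
        have := q2.symm; rw [hb1, zero_mul, mul_eq_zero] at this; tauto
      have q3' : C 1 0 = 0 := by
        have := q3.symm; rw [hb2, zero_mul, mul_eq_zero] at this; tauto
      simp [p2, p3, q2', q3']
    · refine ⟨mul_left_cancel₀ hb2 ?_, mul_left_cancel₀ hb2 ?_, mul_left_cancel₀ hb2 ?_⟩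
      · linear_combination C 1 0 * p1 - A 1 0 * (-q1)
      · linear_combination (C 0 0 - C 1 1) * p1 + C 0 1 * p3 + A 1 0 * q2 + (A 0 0 - A 1 1) * q1 - (A 0 0 - A 1 1) * q1 + 0 * p2
      · linear_combination C 1 0 * p3 + A 1 0 * q3
  · refine ⟨mul_left_cancel₀ hb1 ?_, mul_left_cancel₀ hb1 ?_, mul_left_cancel₀ hb1 ?_⟩
    · linear_combination A 0 1 * q1 + C 0 1 * p1
    · linear_combination A 0 1 * q2 + C 0 1 * p2
    · linear_combination A 1 0 * q2 + C 0 1 * p3 - (A 0 0 - A 1 1) * q1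

lemma pm (h2 : (2 : K) ≠ 0) (D M : Matrix (Fin 2) (Fin 2) K) (tD : D.trace = 0) (tM : M.trace = 0) (hdet : M.det = D.det)
    (hD : D.det ≠ 0) (h : D * M = M * D) : M = D ∨ M = -D := by
  rw [comm_iff] at h
  obtain ⟨q1, q2, q3⟩ := h
  rw [Matrix.trace_fin_two] at tD tM
  rw [Matrix.det_fin_two] at hD
  rw [Matrix.det_fin_two, Matrix.det_fin_two] at hdet
  have eD : D 1 1 = - D 0 0 := by linear_combination tD
  have eM : M 1 1 = - M 0 0 := by linear_combination tM
  rw [eD, eM] at hdet q2 q3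
  rw [eD] at hD
  generalize hx : D 0 0 = x at *
  generalize hy : D 0 1 = y at *
  generalize hz : D 1 0 = z at *
  generalize hx' : M 0 0 = x' at *
  generalize hy' : M 0 1 = y' at *
  generalize hz' : M 1 0 = z' at *
  have q2' : y * x' = y' * x := mul_left_cancel₀ h2 (by linear_combination q2)
  have q3' : z * x' = z' * x := mul_left_cancel₀ h2 (by linear_combination q3)
  set Δ := x ^ 2 + y * z with hΔ
  have hΔ0 : Δ ≠ 0 := fun h0 => hD (by linear_combination -h0)
  set t := x * x' + y * z' with ht
  have ex : x' * Δ = x * t := by rw [hΔ, ht]; linear_combination y * q3'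
  have ey : y' * Δ = y * t := by rw [hΔ, ht]; linear_combination -x * q2' - y * q1
  have ez : z' * Δ = z * t := by rw [hΔ, ht]; linear_combination -x * q3'
  have et : (t - Δ) * (t + Δ) = 0 := by
    rw [hΔ, ht]
    linear_combination x * z' * q2' - y * x' * q3' + y * z' * q1 - (x ^ 2 + y * z) * hdet
  rcases mul_eq_zero.1 et with h | h
  · left
    have h : t = Δ := by linear_combination h
    rw [h] at ex ey ez
    have := mul_right_cancel₀ hΔ0 ex
    have := mul_right_cancel₀ hΔ0 ey
    have := mul_right_cancel₀ hΔ0 ez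
    ext i j
    fin_cases i <;> fin_cases j <;> simp [*]
  · right
    have h : t = -Δ := by linear_combination h
    rw [h] at ex ey ez
    have a1 : x' = - x := mul_right_cancel₀ hΔ0 (by linear_combination ex)
    have a2 : y' = - y := mul_right_cancel₀ hΔ0 (by linear_combination ey)
    have a3 : z' = - z := mul_right_cancel₀ hΔ0 (by linear_combination ez)
    ext i j
    fin_cases i <;> fin_cases j <;> simp [*]

end mats
end NSC

namespace NSC
open MulAction
section pgl
variable {ℓ : ℕ} [Fact ℓ.Prime]

lemma two_ne (hℓ : ℓ ≠ 2) : (2 : ZMod ℓ) ≠ 0 := by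
  have hp : ℓ.Prime := Fact.out
  intro h
  have : ((2 : ℕ) : ZMod ℓ) = 0 := by exact_mod_cast h
  rw [ZMod.natCast_eq_zero_iff] at this
  exact hℓ ((Nat.prime_dvd_prime_iff_eq hp Nat.prime_two).1 this)

lemma center_iff (A : GL2 ℓ) : A ∈ Subgroup.center (GL2 ℓ) ↔ IsSc A.1 := by
  rw [Matrix.GeneralLinearGroup.mem_center_iff_val_mem_range_scalar]
  constructor
  · rintro ⟨c, hc⟩
    rw [← hc]
    simp [IsSc]
  · rintro ⟨h1, h2, h3⟩
    refine ⟨A.1 0 0, ?_⟩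
    ext i j
    fin_cases i <;> fin_cases j <;> simp [h1, h2, h3]

lemma toPGL_one (A : GL2 ℓ) : toPGL ℓ A = 1 ↔ IsSc A.1 := by
  rw [← center_iff]
  exact QuotientGroup.eq_one_iff A

def Rel (p q : PGL2 ℓ) : Prop := ∃ A B : GL2 ℓ, toPGL ℓ A = p ∧ toPGL ℓ B = q ∧ A * B = B * A

lemma rel_iff (A B : GL2 ℓ) : Rel (toPGL ℓ A) (toPGL ℓ B) ↔ A * B = B * A := by
  constructor
  · rintro ⟨A', B', hA, hB, h⟩
    obtain ⟨z, hz, rfl⟩ : ∃ z ∈ Subgroup.center (GL2 ℓ), A = A' * z := by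
      refine ⟨A'⁻¹ * A, ?_, by simp⟩
      exact QuotientGroup.eq.1 hA
    obtain ⟨w, hw, rfl⟩ : ∃ w ∈ Subgroup.center (GL2 ℓ), B = B' * w := by
      refine ⟨B'⁻¹ * B, ?_, by simp⟩
      exact QuotientGroup.eq.1 hB
    rw [Subgroup.mem_center_iff] at hz hw
    have c1 : Commute A' B' := h
    have hz' : ∀ g, Commute g z := hz
    have hw' : ∀ g, Commute g w := hw
    exact (((c1.mul_right (hw' _))).mul_left ((hz' _).symm))
  · intro h
    exact ⟨A, B, rfl, rfl, h⟩

lemma toMat (A B : GL2 ℓ) : A * B = B * A ↔ A.1 * B.1 = B.1 * A.1 := by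
  rw [Units.ext_iff]; rfl

lemma disc_eq (A : Matrix (Fin 2) (Fin 2) (ZMod ℓ)) :
    disc A = (A 0 0 - A 1 1) ^ 2 + 4 * A 0 1 * A 1 0 := by
  rw [disc, Matrix.trace_fin_two, Matrix.det_fin_two]; ring

lemma dd_trace (A : Matrix (Fin 2) (Fin 2) (ZMod ℓ)) : (dd A).trace = 0 := by
  simp [dd, Matrix.trace_fin_two]; ring

lemma dd_det (A : Matrix (Fin 2) (Fin 2) (ZMod ℓ)) : (dd A).det = - disc A := by
  simp [dd, disc, Matrix.trace_fin_two, Matrix.det_fin_two]; ring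

lemma dd_sq (A : Matrix (Fin 2) (Fin 2) (ZMod ℓ)) : dd A * dd A = disc A • 1 := by
  ext i j
  fin_cases i <;> fin_cases j <;> simp [dd, disc, Matrix.trace_fin_two, Matrix.det_fin_two, Matrix.mul_apply, Fin.sum_univ_two] <;> ring

lemma dd_comm (hℓ : ℓ ≠ 2) (A B : Matrix (Fin 2) (Fin 2) (ZMod ℓ)) : B * dd A = dd A * B ↔ A * B = B * A := by
  unfold dd
  rw [mul_sub, sub_mul]
  simp only [Matrix.mul_smul, Matrix.smul_mul, mul_one, one_mul, sub_left_inj]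
  constructor
  · intro h
    exact (smul_right_injective _ (two_ne hℓ) h).symm
  · intro h
    rw [h]

/-- nonscalar elements with nonsquare discriminant -/
lemma nonsq (hℓ : ℓ ≠ 2) (δ : ZMod ℓ) (hδ : ¬ IsSquare δ) (g x : GL2 ℓ) (h : InCns δ (x * g * x⁻¹)) :
    IsSc g.1 ∨ ¬ IsSquare (disc g.1) := by
  set N := x * g * x⁻¹ with hN
  obtain ⟨h1, h2⟩ := h
  change N.1 1 1 = N.1 0 0 at h1
  change N.1 0 1 = δ * N.1 1 0 at h2
  by_cases h0 : N.1 1 0 = 0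
  · left
    have : IsSc N.1 := ⟨by rw [h2, h0, mul_zero], h0, h1.symm⟩
    rw [← center_iff] at this ⊢
    have h3 := (inferInstance : (Subgroup.center (GL2 ℓ)).Normal).conj_mem _ this x⁻¹
    rw [hN] at h3
    simpa [mul_assoc] using h3
  · right
    have hd : disc g.1 = disc N.1 := by
      have e : N.1 = x.1 * g.1 * (x⁻¹).1 := rfl
      have e2 : (x⁻¹).1 * x.1 = 1 := by rw [← Units.val_mul]; simp
      unfold disc
      have t : N.1.trace = g.1.trace := by
        rw [e, mul_assoc, Matrix.trace_mul_comm, mul_assoc, e2, mul_one]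
      have d : N.1.det = g.1.det := by
        rw [e, Matrix.det_mul, Matrix.det_mul, mul_right_comm, ← Matrix.det_mul, mul_comm, ← Matrix.det_mul]
        have e3 : x.1 * (x⁻¹).1 = 1 := by rw [← Units.val_mul]; simp
        rw [e3, mul_one]
      rw [t, d]
    rintro ⟨s, hs⟩
    apply hδ
    rw [hd, disc_eq, h1, h2] at hs
    refine ⟨s / (2 * N.1 1 0), ?_⟩
    have := two_ne hℓ
    field_simp
    linear_combination hs

lemma pm_conj (hℓ : ℓ ≠ 2) (A g : GL2 ℓ) (hA : ¬ IsSquare (disc A.1))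
    (h : A * (g * A * g⁻¹) = (g * A * g⁻¹) * A) :
    g.1 * dd A.1 = dd A.1 * g.1 ∨ g.1 * dd A.1 = - (dd A.1 * g.1) := by
  have e2 : (g⁻¹).1 * g.1 = 1 := by rw [← Units.val_mul]; simp
  have e3 : g.1 * (g⁻¹).1 = 1 := by rw [← Units.val_mul]; simp
  have hM : g.1 * dd A.1 * (g⁻¹).1 = dd (g * A * g⁻¹).1 := by
    have t : (g * A * g⁻¹).1.trace = A.1.trace := by
      rw [Units.val_mul, Units.val_mul, mul_assoc, Matrix.trace_mul_comm, mul_assoc, e2, mul_one]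
    unfold dd
    rw [t, Units.val_mul, Units.val_mul, mul_sub, sub_mul]
    simp only [Matrix.mul_smul, Matrix.smul_mul, mul_one, e3]
  have hd : (g.1 * dd A.1 * (g⁻¹).1).det = (dd A.1).det := by
    rw [Matrix.det_mul, Matrix.det_mul, mul_right_comm, ← Matrix.det_mul, e3, Matrix.det_one, one_mul]
  have ht : (g.1 * dd A.1 * (g⁻¹).1).trace = 0 := by rw [hM, dd_trace]
  have hne : (dd A.1).det ≠ 0 := by
    rw [dd_det, neg_ne_zero]; intro h0; rw [h0] at hA; exact hA ⟨0, by simp⟩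
  have hc : dd A.1 * (g.1 * dd A.1 * (g⁻¹).1) = (g.1 * dd A.1 * (g⁻¹).1) * dd A.1 := by
    rw [hM, dd_comm hℓ, dd_comm hℓ]
    exact (toMat _ _).1 h
  have key : ∀ M, g.1 * dd A.1 * (g⁻¹).1 = M → g.1 * dd A.1 = M * g.1 := by
    rintro _ rfl
    rw [mul_assoc, e2, mul_one]
  rcases pm (two_ne hℓ) _ _ (dd_trace _) ht hd hne hc with h | h
  · left; exact key _ h
  · right; rw [key _ h, neg_mul]

lemma anti_sq (hℓ : ℓ ≠ 2) (A g : Matrix (Fin 2) (Fin 2) (ZMod ℓ)) (hA : ¬ IsSquare (disc A))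
    (h : g * dd A = - (dd A * g)) : IsSc (g * g) := by
  have hne : disc A ≠ 0 := by intro h0; rw [h0] at hA; exact hA ⟨0, by simp⟩
  have h1 : (g * (dd A * dd A)).trace = - ((dd A * dd A) * g).trace := by
    rw [← mul_assoc, h, neg_mul, Matrix.trace_neg, mul_assoc, Matrix.trace_mul_comm, mul_assoc, ← mul_assoc, mul_assoc, Matrix.trace_mul_comm, mul_assoc]
  rw [dd_sq] at h1
  simp only [Matrix.mul_smul, Matrix.smul_mul, mul_one, one_mul, Matrix.trace_smul, smul_eq_mul] at h1
  have h2 : g.trace = 0 := by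
    have : (2 * disc A) * g.trace = 0 := by linear_combination h1
    exact (mul_eq_zero.1 this).resolve_left (mul_ne_zero (two_ne hℓ) hne)
  rw [Matrix.trace_fin_two] at h2
  have e : g 1 1 = - g 0 0 := by linear_combination h2
  refine ⟨?_, ?_, ?_⟩ <;> simp only [Matrix.mul_apply, Fin.sum_univ_two, e] <;> ring

/-- The order of the projective image divides `ℓ + 1`. -/
lemma card_dvd (G : Subgroup (GL2 ℓ)) (hG : ∀ g ∈ G, IsSc g.1 ∨ ¬ IsSquare (disc g.1)) :
    Nat.card (projImage G) ∣ ℓ + 1 := by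
  classical
  have hstab : ∀ x : OnePoint (ZMod ℓ), stabilizer G x = ((toPGL ℓ).comp G.subtype).ker := by
    intro x
    ext ⟨g, hg⟩
    rw [mem_stabilizer_iff, MonoidHom.mem_ker]
    change g • x = x ↔ toPGL ℓ g = 1
    rw [toPGL_one]
    constructor
    · intro h
      refine (hG g hg).resolve_right (not_not.2 ?_)
      rw [disc_eq]
      cases x with
      | infty =>
        rw [OnePoint.smul_infty_eq_self_iff] at h
        have h : g.1 1 0 = 0 := h
        exact ⟨g.1 0 0 - g.1 1 1, by rw [h]; ring⟩
      | coe c =>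
        rw [OnePoint.smul_some_eq_ite] at h
        split_ifs at h with h0
        · exact absurd h (OnePoint.infty_ne_coe c)
        · have h1 := OnePoint.coe_injective h
          rw [div_eq_iff h0] at h1
          have h1 : g.1 0 0 * c + g.1 0 1 = c * (g.1 1 0 * c + g.1 1 1) := h1
          refine ⟨2 * g.1 1 0 * c + g.1 1 1 - g.1 0 0, ?_⟩
          linear_combination (4 * g.1 1 0) * h1
    · rintro ⟨h1, h2, h3⟩
      have hdet : g.1.det ≠ 0 := by
        have := g.isUnit
        rw [Matrix.isUnit_iff_isUnit_det] at this
        exact this.ne_zero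
      rw [Matrix.det_fin_two, h1, h3, zero_mul, sub_zero] at hdet
      have h4 : g.1 1 1 ≠ 0 := fun h => hdet (by rw [h, mul_zero])
      cases x with
      | infty =>
        rw [OnePoint.smul_infty_eq_self_iff]; exact h2
      | coe c =>
        rw [OnePoint.smul_some_eq_ite]
        have h2 : g 1 0 = 0 := h2
        have h1 : g 0 1 = 0 := h1
        have h3 : g 0 0 = g 1 1 := h3
        have h4 : g 1 1 ≠ 0 := h4
        rw [h2, h1, h3, zero_mul, zero_add, if_neg h4, add_zero, mul_div_cancel_left₀ _ h4]
  have hr : projImage G = ((toPGL ℓ).comp G.subtype).range := by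
    rw [projImage, MonoidHom.range_comp, Subgroup.range_subtype]
  have hcard : Nat.card (OnePoint (ZMod ℓ)) = ℓ + 1 := by
    have : Nat.card (Option (ZMod ℓ)) = ℓ + 1 := by
      rw [Finite.card_option, Nat.card_zmod]
    exact this
  have : Finite (OnePoint (ZMod ℓ)) := inferInstanceAs (Finite (Option (ZMod ℓ)))
  have : Fintype (orbitRel.Quotient G (OnePoint (ZMod ℓ))) := Fintype.ofFinite _
  rw [← hcard, Nat.card_congr (selfEquivSigmaOrbits G (OnePoint (ZMod ℓ))), Nat.card_sigma]
  refine Finset.dvd_sum fun w _ => ?_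
  rw [hr, ← Subgroup.index_ker, ← hstab w.out, index_stabilizer]
  exact dvd_refl _

end pgl
end NSC

namespace NSC
section final
variable {ℓ : ℕ} [Fact ℓ.Prime]

lemma comm_of_dd (hℓ : ℓ ≠ 2) (A g : GL2 ℓ) (h : g.1 * dd A.1 = dd A.1 * g.1) : A * g = g * A :=
  (toMat _ _).2 ((dd_comm hℓ _ _).1 h)

lemma shape (hℓ : ℓ ≠ 2) (δ : ZMod ℓ) (N g : GL2 ℓ) (hN : InCns δ N) (hns : ¬ IsSc N.1)
    (h : g.1 * dd N.1 = dd N.1 * g.1 ∨ g.1 * dd N.1 = - (dd N.1 * g.1)) : InNns δ g := by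
  obtain ⟨h1, h2⟩ := hN
  change N.1 1 1 = N.1 0 0 at h1
  change N.1 0 1 = δ * N.1 1 0 at h2
  have hb : N.1 1 0 ≠ 0 := fun h0 => hns ⟨by rw [h2, h0, mul_zero], h0, h1.symm⟩
  have t2 := two_ne hℓ
  have hd : dd N.1 = !![0, 2 * δ * N.1 1 0; 2 * N.1 1 0, 0] := by
    ext i j
    fin_cases i <;> fin_cases j <;>
      simp [dd, Matrix.trace_fin_two, h1, h2] <;> ring
  have hk : (2 * N.1 1 0) ≠ 0 := mul_ne_zero t2 hb
  rw [hd] at h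
  rcases h with h | h
  · left
    have e0 := congrFun (congrFun h 0) 0
    have e1 := congrFun (congrFun h 1) 0
    simp [Matrix.mul_apply, Fin.sum_univ_two, Matrix.vecMul, dotProduct] at e0 e1
    constructor
    · change g.1 1 1 = g.1 0 0
      apply mul_left_cancel₀ hk
      linear_combination e1
    · change g.1 0 1 = δ * g.1 1 0
      apply mul_left_cancel₀ hk
      linear_combination e0
  · right
    have e0 := congrFun (congrFun h 0) 0
    have e1 := congrFun (congrFun h 1) 0
    simp [Matrix.mul_apply, Fin.sum_univ_two, Matrix.vecMul, dotProduct] at e0 e1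
    constructor
    · change g.1 1 1 = - g.1 0 0
      apply mul_left_cancel₀ hk
      linear_combination e1
    · change g.1 0 1 = - (δ * g.1 1 0)
      apply mul_left_cancel₀ hk
      linear_combination e0

lemma isSc_conj (x g : GL2 ℓ) : IsSc (x * g * x⁻¹).1 ↔ IsSc g.1 := by
  rw [← toPGL_one, ← toPGL_one, map_mul, map_mul, map_inv, conj_eq_one_iff]

end final
end NSC

/-- If every element of `G ≤ GL₂(F_ℓ)` lies in a conjugate of the nonsplit
Cartan, then `G` is contained in a conjugate of `C_ns`, or of `N_ns`, or its projective
image is exceptional with the stated congruence on `ℓ`. -/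
theorem local_global_nonsplit_cartan
    {ℓ : ℕ} [Fact ℓ.Prime] (hℓ : ℓ ≠ 2) (δ : ZMod ℓ) (hδ : ¬ IsSquare δ)
    (G : Subgroup (GL2 ℓ))
    (hloc : ∀ g ∈ G, ∃ x : GL2 ℓ, InCns δ (x * g * x⁻¹)) :
    (∃ x : GL2 ℓ, ∀ g ∈ G, InCns δ (x * g * x⁻¹)) ∨
    (∃ x : GL2 ℓ, ∀ g ∈ G, InNns δ (x * g * x⁻¹)) ∨
    (IsA4 (projImage G) ∧ ℓ % 12 = 11) ∨
    (IsS4 (projImage G) ∧ ℓ % 24 = 23) ∨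
    (IsA5 (projImage G) ∧ ℓ % 60 = 59) := by
  have hG : ∀ g ∈ G, NSC.IsSc g.1 ∨ ¬ IsSquare (NSC.disc g.1) := fun g hg => by
    obtain ⟨x, hx⟩ := hloc g hg
    exact NSC.nonsq hℓ δ hδ g x hx
  have hlift : ∀ a : projImage G, ∃ A ∈ G, toPGL ℓ A = a.1 := fun a => a.2
  have hne : ∀ (a : projImage G) (A : GL2 ℓ), A ∈ G → toPGL ℓ A = a.1 → a ≠ 1 →
      ¬ NSC.IsSc A.1 ∧ ¬ IsSquare (NSC.disc A.1) := by
    intro a A hA h ha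
    have h1 : ¬ NSC.IsSc A.1 := by
      rw [← NSC.toPGL_one, h]
      exact fun h => ha (Subtype.ext h)
    exact ⟨h1, (hG A hA).resolve_left h1⟩
  have hfin : Finite (projImage G) := by
    have : Finite (PGL2 ℓ) := inferInstance
    infer_instance
  have hdvd := NSC.card_dvd G hG
  have key := NSC.classify_rel (fun a b : projImage G => NSC.Rel a.1 b.1)
    (fun a => by
      obtain ⟨A, -, hA⟩ := hlift a
      rw [← hA, NSC.rel_iff])
    (fun a b h => by
      obtain ⟨A, -, hA⟩ := hlift a
      obtain ⟨B, -, hB⟩ := hlift b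
      simp only [← hA, ← hB, NSC.rel_iff] at h ⊢
      exact h.symm)
    (fun a => by
      obtain ⟨A, -, hA⟩ := hlift a
      rw [← hA, Subgroup.coe_one, ← map_one (toPGL ℓ), NSC.rel_iff]
      simp)
    (fun a b c h1 h2 => by
      obtain ⟨A, -, hA⟩ := hlift a
      obtain ⟨B, -, hB⟩ := hlift b
      obtain ⟨C, -, hC⟩ := hlift c
      simp only [Subgroup.coe_mul]
      rw [← hA, ← hB, NSC.rel_iff] at h1
      rw [← hA, ← hC, NSC.rel_iff] at h2
      rw [← hA, ← hB, ← hC, ← map_mul, NSC.rel_iff]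
      exact Commute.mul_right (show Commute A B from h1) h2)
    (fun a b h1 => by
      obtain ⟨A, -, hA⟩ := hlift a
      obtain ⟨B, -, hB⟩ := hlift b
      simp only [Subgroup.coe_inv]
      rw [← hA, ← hB, NSC.rel_iff] at h1
      rw [← hA, ← hB, ← map_inv, NSC.rel_iff]
      exact Commute.inv_right (show Commute A B from h1))
    (fun a b c hb h1 h2 => by
      obtain ⟨A, -, hA⟩ := hlift a
      obtain ⟨B, hBG, hB⟩ := hlift b
      obtain ⟨C, -, hC⟩ := hlift c
      have hb' := (hne b B hBG hB hb).1
      rw [← hA, ← hB, NSC.rel_iff, NSC.toMat] at h1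
      rw [← hB, ← hC, NSC.rel_iff, NSC.toMat] at h2
      rw [← hA, ← hC, NSC.rel_iff, NSC.toMat]
      exact NSC.comm_trans _ _ _ hb' h1 h2)
    (fun g a b h1 => by
      obtain ⟨A, -, hA⟩ := hlift a
      obtain ⟨B, -, hB⟩ := hlift b
      obtain ⟨g', -, hg⟩ := hlift g
      simp only [Subgroup.coe_mul, Subgroup.coe_inv]
      rw [← hA, ← hB, NSC.rel_iff] at h1
      rw [← hA, ← hB, ← hg, ← map_inv, ← map_mul, ← map_mul, ← map_mul, ← map_mul, NSC.rel_iff]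
      have : g' * (A * B) * g'⁻¹ = g' * (B * A) * g'⁻¹ := by rw [h1]
      simpa [mul_assoc] using this)
    (fun a g ha h1 => by
      obtain ⟨A, hAG, hA⟩ := hlift a
      obtain ⟨g', -, hg⟩ := hlift g
      have ha' := (hne a A hAG hA ha).2
      simp only [Subgroup.coe_mul, Subgroup.coe_inv] at h1
      rw [← hA, ← hg, ← map_inv, ← map_mul, ← map_mul, NSC.rel_iff] at h1
      rcases NSC.pm_conj hℓ A g' ha' h1 with h | h
      · left
        rw [← hA, ← hg, NSC.rel_iff]
        exact NSC.comm_of_dd hℓ A g' h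
      · right
        have h3 := NSC.anti_sq hℓ A.1 g'.1 ha' h
        apply Subtype.ext
        rw [Subgroup.coe_mul, ← hg, ← map_mul, Subgroup.coe_one, NSC.toPGL_one]
        exact h3)
    (fun a g k ha h1 h2 n1 n2 => by
      obtain ⟨A, hAG, hA⟩ := hlift a
      obtain ⟨g', -, hg⟩ := hlift g
      obtain ⟨k', -, hk⟩ := hlift k
      have ha' := (hne a A hAG hA ha).2
      simp only [Subgroup.coe_mul, Subgroup.coe_inv] at h1 h2
      rw [← hA, ← hg, ← map_inv, ← map_mul, ← map_mul, NSC.rel_iff] at h1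
      rw [← hA, ← hk, ← map_inv, ← map_mul, ← map_mul, NSC.rel_iff] at h2
      rw [← hA, ← hg, NSC.rel_iff] at n1
      rw [← hA, ← hk, NSC.rel_iff] at n2
      have q1 := (NSC.pm_conj hℓ A g' ha' h1).resolve_left (fun h => n1 (NSC.comm_of_dd hℓ A g' h))
      have q2 := (NSC.pm_conj hℓ A k' ha' h2).resolve_left (fun h => n2 (NSC.comm_of_dd hℓ A k' h))
      simp only [Subgroup.coe_mul]
      rw [← hA, ← hg, ← hk, ← map_mul, NSC.rel_iff]
      apply NSC.comm_of_dd hℓ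
      rw [Units.val_mul, mul_assoc, q2, mul_neg, ← mul_assoc, q1, neg_mul, neg_neg, mul_assoc])
  rcases key with (h | ⟨a, ha, h⟩) | ⟨h, hc⟩ | ⟨h, hc⟩ | ⟨h, hc⟩
  · left
    refine ⟨1, fun g hg => ?_⟩
    have hs : Subsingleton (projImage G) := (Nat.card_eq_one_iff_unique.1 h).1
    have h1 : toPGL ℓ g = 1 := by
      have : (⟨toPGL ℓ g, ⟨g, hg, rfl⟩⟩ : projImage G) = 1 := Subsingleton.elim _ _
      exact congrArg Subtype.val this
    rw [NSC.toPGL_one] at h1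
    obtain ⟨h1, h2, h3⟩ := h1
    rw [one_mul, inv_one, mul_one]
    refine ⟨h3.symm, ?_⟩
    change g.1 0 1 = δ * g.1 1 0
    rw [h1, h2, mul_zero]
  · right; left
    obtain ⟨A, hAG, hA⟩ := hlift a
    have ha' := (hne a A hAG hA ha).1
    obtain ⟨x, hx⟩ := hloc A hAG
    refine ⟨x, fun g hg => ?_⟩
    have hN : ¬ NSC.IsSc (x * A * x⁻¹).1 := by rwa [NSC.isSc_conj]
    have hN2 : ¬ IsSquare (NSC.disc (x * A * x⁻¹).1) :=
      (NSC.nonsq hℓ δ hδ (x * A * x⁻¹) 1 (by simpa using hx)).resolve_left hN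
    have hr := h ⟨toPGL ℓ g, ⟨g, hg, rfl⟩⟩
    simp only [Subgroup.coe_mul, Subgroup.coe_inv] at hr
    rw [← hA, ← map_inv, ← map_mul, ← map_mul, NSC.rel_iff] at hr
    refine NSC.shape hℓ δ _ _ hx hN (NSC.pm_conj hℓ _ _ hN2 ?_)
    have : x * (A * (g * A * g⁻¹)) * x⁻¹ = x * ((g * A * g⁻¹) * A) * x⁻¹ := by rw [hr]
    simpa [mul_assoc] using this
  · right; right; left
    rw [hc] at hdvd
    exact ⟨h, by omega⟩
  · right; right; right; left
    rw [hc] at hdvd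
    exact ⟨h, by omega⟩
  · right; right; right; right
    rw [hc] at hdvd
    exact ⟨h, by omega⟩
end

section
/- Let ℓ be an odd prime and let G be a subgroup of GL₂(F_ℓ) such that every element of G lies in a conjugate of N_sp (the normalizer of the split Cartan), but some element of G is not diagonalizable over F_ℓ. Then one of the following holds: (0) G is contained in a conjugate of N_sp; (1) G is contained in a conjugate of N_ns and ℓ ≡ 3 (mod 4); (2) the image H of G in PGL₂(F_ℓ) is isomorphic to A₄ and ℓ ≡ 7 (mod 12); (3) H is isomorphic to S₄ and ℓ ≡ 13 (mod 24); (4) H is isomorphic to A₅ and ℓ ≡ 31 (mod 60). -/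
open Matrix

section

open MulAction
open scoped Pointwise

/-- Stable pair. -/
def StablePair (H P : Type*) [Group H] [MulAction H P] : Prop :=
  ∃ h : H, h ≠ 1 ∧ ∀ g : H, fixedBy P (g * h * g⁻¹) = fixedBy P h

lemma stablePair_of_zpowers {H P : Type*} [Group H] [MulAction H P]
    (h2 : ∀ h : H, h ≠ 1 → (fixedBy P h).ncard = 2)
    (h : H) (h1 : h ≠ 1) (hz : ∀ g : H, g * h * g⁻¹ ∈ Subgroup.zpowers h) : StablePair H P := by
  refine ⟨h, h1, fun g => ?_⟩
  have hne : g * h * g⁻¹ ≠ 1 := by simpa using h1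
  have hf : (fixedBy P (g * h * g⁻¹)).Finite := Set.finite_of_ncard_ne_zero (by rw [h2 _ hne]; simp)
  symm
  apply Set.eq_of_subset_of_ncard_le _ _ hf
  · obtain ⟨k, hk⟩ := Subgroup.mem_zpowers_iff.1 (hz g)
    rw [← hk]
    exact fixedBy_subset_fixedBy_zpow P h k
  · rw [h2 _ hne, h2 _ h1]

lemma stablePair_of_normal {H P : Type*} [Group H] [MulAction H P]
    (h2 : ∀ h : H, h ≠ 1 → (fixedBy P h).ncard = 2)
    (p : ℕ) (hp : p.Prime) (K : Subgroup H) (hK : K.Normal) (hc : Nat.card K = p) :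
    StablePair H P := by
  have := Fact.mk hp
  have : Nontrivial K := by
    have : Finite K := Nat.finite_of_card_ne_zero (by rw [hc]; exact hp.ne_zero)
    exact Finite.one_lt_card_iff_nontrivial.1 (by rw [hc]; exact hp.one_lt)
  obtain ⟨k, hk⟩ := exists_ne (1 : K)
  refine stablePair_of_zpowers h2 k (by simpa using hk) fun g => ?_
  have hm : g * k * g⁻¹ ∈ K := hK.conj_mem _ k.2 g
  have := mem_zpowers_of_prime_card hc hk (g' := ⟨_, hm⟩)
  obtain ⟨n, hn⟩ := Subgroup.mem_zpowers_iff.1 this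
  refine Subgroup.mem_zpowers_iff.2 ⟨n, ?_⟩
  simpa using congrArg Subtype.val hn

/-- Embedding in `S_n` by conjugation on Sylow subgroups. -/
lemma iso_perm_of_inj {H α : Type*} [Group H] [Finite H] {n : ℕ} [Finite α] (hα : Nat.card α = n)
    (f : H →* Equiv.Perm α) (hf : Function.Injective f) (hc : Nat.card H = n.factorial) :
    Nonempty (H ≃* Equiv.Perm (Fin n)) := by
  have e : α ≃ Fin n := Finite.equivFinOfCardEq hα
  have hb : Function.Bijective f := by
    rw [Nat.bijective_iff_injective_and_card]
    exact ⟨hf, by rw [hc, Nat.card_perm, hα]⟩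
  exact ⟨(MulEquiv.ofBijective f hb).trans e.permCongrHom⟩

lemma iso_alt_of_inj {H α : Type*} [Group H] [Finite H] {n : ℕ} [Finite α] (hα : Nat.card α = n)
    (f : H →* Equiv.Perm α) (hf : Function.Injective f) (hc : 2 * Nat.card H = n.factorial) :
    Nonempty (H ≃* alternatingGroup (Fin n)) := by
  have e : α ≃ Fin n := Finite.equivFinOfCardEq hα
  let f' : H →* Equiv.Perm (Fin n) := e.permCongrHom.toMonoidHom.comp f
  have hf' : Function.Injective f' := e.permCongrHom.injective.comp hf
  have hr : f'.range = alternatingGroup (Fin n) := by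
    apply Equiv.Perm.eq_alternatingGroup_of_index_eq_two
    have h1 := f'.range.card_mul_index
    rw [Nat.card_perm, Nat.card_fin, ← hc, ← Nat.card_congr (MonoidHom.ofInjective hf').toEquiv,
      mul_comm 2] at h1
    exact Nat.eq_of_mul_eq_mul_left Nat.card_pos h1
  exact ⟨(MonoidHom.ofInjective hf').trans (MulEquiv.subgroupCongr hr)⟩

lemma sylow_ker_le {H : Type*} [Group H] {p : ℕ} (S : Sylow p H) :
    (toPermHom H (Sylow p H)).ker ≤ Subgroup.normalizer (S : Set H) := by
  intro g hg
  rw [← Sylow.smul_eq_iff_mem_normalizer]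
  have := DFunLike.congr_fun (MonoidHom.mem_ker.1 hg) S
  simpa using this

/-- Faithful action on four Sylow 3-subgroups. -/
lemma sylow3_faithful {H P : Type*} [Group H] [Finite H] [MulAction H P]
    (h2 : ∀ h : H, h ≠ 1 → (fixedBy P h).ncard = 2)
    (hN : Nat.card H = 12 ∨ Nat.card H = 24) :
    StablePair H P ∨ (Nat.card (Sylow 3 H) = 4 ∧
      Function.Injective (toPermHom H (Sylow 3 H))) := by
  have : Fact (Nat.Prime 3) := ⟨by norm_num⟩
  have hS : ∀ S : Sylow 3 H, Nat.card S = 3 := by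
    intro S
    have h1 := S.card_mul_index
    have h3 := S.not_dvd_index
    obtain ⟨k, hk⟩ := S.isPGroup'.exists_card_eq
    have hd : 3 ∣ Nat.card S := S.dvd_card_of_dvd_card (by omega)
    have : k < 3 := by
      by_contra hlt
      have : 3 ^ 3 ∣ Nat.card H := (pow_dvd_pow 3 (not_lt.1 hlt)).trans (hk ▸ Subgroup.card_subgroup_dvd_card _)
      omega
    interval_cases k
    · omega
    · simpa using hk
    · have : 3 ^ 2 ∣ Nat.card H := (hk ▸ Subgroup.card_subgroup_dvd_card _)
      omega
  let S : Sylow 3 H := default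
  have hidx : S.index ∣ 8 := by
    have h1 := S.card_mul_index
    rw [hS S] at h1
    have : S.index = 4 ∨ S.index = 8 := by omega
    rcases this with h | h <;> rw [h] <;> norm_num
  have hd : Nat.card (Sylow 3 H) ∣ 8 := S.card_dvd_index.trans hidx
  have hm := card_sylow_modEq_one 3 H
  have hc : Nat.card (Sylow 3 H) = 1 ∨ Nat.card (Sylow 3 H) = 4 := by
    have hle := Nat.le_of_dvd (by norm_num) hd
    unfold Nat.ModEq at hm
    generalize Nat.card (Sylow 3 H) = c at *
    interval_cases c <;> omega
  rcases hc with hc | hc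
  · left
    have : Subsingleton (Sylow 3 H) := (Nat.card_eq_one_iff_unique.1 hc).1
    exact stablePair_of_normal h2 3 (by norm_num) S S.normal_of_subsingleton (hS S)
  by_cases hinj : Function.Injective (toPermHom H (Sylow 3 H))
  · exact Or.inr ⟨hc, hinj⟩
  left
  set K := (toPermHom H (Sylow 3 H)).ker with hKdef
  have hKn : K.Normal := MonoidHom.normal_ker _
  have hKb : K ≠ ⊥ := fun h => hinj ((MonoidHom.ker_eq_bot_iff _).1 h)
  have hnc : Nat.card (Subgroup.normalizer (S : Set H)) ∣ 6 := by
    have h1 := (Subgroup.normalizer (S : Set H)).card_mul_index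
    have h3 := S.card_eq_index_normalizer
    rw [hc] at h3
    rw [← h3] at h1
    have : Nat.card (Subgroup.normalizer (S : Set H)) = 3 ∨
      Nat.card (Subgroup.normalizer (S : Set H)) = 6 := by omega
    rcases this with h | h <;> rw [h] <;> norm_num
  have hKd : Nat.card K ∣ 6 := (Subgroup.card_dvd_of_le (sylow_ker_le S)).trans hnc
  have hK3 : ¬ 3 ∣ Nat.card K := by
    intro h3
    obtain ⟨x, hx⟩ := exists_prime_orderOf_dvd_card' 3 h3
    have hxo : orderOf (x : H) = 3 := by simpa using hx
    have hz : IsPGroup 3 (Subgroup.zpowers (x : H)) :=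
      IsPGroup.of_card (n := 1) (by simp [Nat.card_zpowers, hxo])
    obtain ⟨Q, hQ⟩ := hz.exists_le_sylow
    have hQe : Subgroup.zpowers (x : H) = Q :=
      Subgroup.eq_of_le_of_card_ge hQ (by rw [hS Q, Nat.card_zpowers, hxo])
    have hQK : (Q : Subgroup H) ≤ K := by
      rw [← hQe, Subgroup.zpowers_le]; exact x.2
    have hall : ∀ R : Sylow 3 H, (R : Subgroup H) ≤ K := by
      intro R
      obtain ⟨g, hg⟩ := MulAction.exists_smul_eq H Q R
      rw [← hg]
      intro y hy
      have hy' : y ∈ MulAut.conj g • (Q : Subgroup H) := hy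
      rw [Subgroup.mem_smul_pointwise_iff_exists] at hy'
      obtain ⟨z, hz, rfl⟩ := hy'
      exact hKn.conj_mem _ (hQK hz) g
    -- each element of R is in the normalizer of S
    have : ∀ R : Sylow 3 H, R = S := by
      intro R
      have hle : (R : Subgroup H) ≤ Subgroup.normalizer (S : Set H) := (hall R).trans (sylow_ker_le S)
      have h5 := IsPGroup.inf_normalizer_sylow R.isPGroup' S
      apply Sylow.ext
      have h6 : (R : Subgroup H) ≤ S := by
        have : (R : Subgroup H) ⊓ Subgroup.normalizer (S : Set H) = R := inf_eq_left.2 hle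
        rw [this] at h5
        rw [h5]; exact inf_le_right
      exact Subgroup.eq_of_le_of_card_ge h6 (by rw [hS R, hS S])
    have : Subsingleton (Sylow 3 H) := ⟨fun a b => (this a).trans (this b).symm⟩
    rw [Nat.card_of_subsingleton S] at hc
    omega
  have hK2 : Nat.card K = 2 := by
    have hne1 : Nat.card K ≠ 1 := fun h => hKb (Subgroup.card_eq_one.1 h)
    have hle := Nat.le_of_dvd (by norm_num) hKd
    generalize Nat.card K = c at *
    interval_cases c <;> omega
  exact stablePair_of_normal h2 2 (by norm_num) K hKn hK2

lemma case12 {H P : Type*} [Group H] [Finite H] [MulAction H P]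
    (h2 : ∀ h : H, h ≠ 1 → (fixedBy P h).ncard = 2) (hN : Nat.card H = 12) :
    StablePair H P ∨ Nonempty (H ≃* alternatingGroup (Fin 4)) := by
  rcases sylow3_faithful h2 (Or.inl hN) with h | ⟨h, h'⟩
  · exact Or.inl h
  · exact Or.inr (iso_alt_of_inj h _ h' (by rw [hN]; rfl))

lemma case24 {H P : Type*} [Group H] [Finite H] [MulAction H P]
    (h2 : ∀ h : H, h ≠ 1 → (fixedBy P h).ncard = 2) (hN : Nat.card H = 24) :
    StablePair H P ∨ Nonempty (H ≃* Equiv.Perm (Fin 4)) := by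
  rcases sylow3_faithful h2 (Or.inr hN) with h | ⟨h, h'⟩
  · exact Or.inl h
  · exact Or.inr (iso_perm_of_inj h _ h' (by rw [hN]; rfl))

lemma exists_fixed {H P : Type*} [Group H] [MulAction H P]
    (h2 : ∀ h : H, h ≠ 1 → (fixedBy P h).ncard = 2) (h : H) (h1 : h ≠ 1) : ∃ p : P, h • p = p := by
  obtain ⟨p, hp⟩ := Set.nonempty_of_ncard_ne_zero (s := fixedBy P h) (by rw [h2 h h1]; norm_num)
  exact ⟨p, hp⟩

lemma card_centralizer_le {H P : Type*} [Group H] [Finite H] [MulAction H P]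
    (h2 : ∀ h : H, h ≠ 1 → (fixedBy P h).ncard = 2) (x : H) (hx : x ≠ 1) (p : P) (hp : x • p = p) :
    Nat.card (Subgroup.centralizer {x}) ≤ 2 * Nat.card (stabilizer H p) := by
  have h1 := Nat.card_congr (MulAction.orbitProdStabilizerEquivGroup (Subgroup.centralizer {x}) p)
  rw [Nat.card_prod] at h1
  rw [← h1]
  apply Nat.mul_le_mul
  · rw [← h2 x hx]
    have hf : (fixedBy P x).Finite := Set.finite_of_ncard_ne_zero (by rw [h2 _ hx]; simp)
    rw [Nat.card_coe_set_eq]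
    apply Set.ncard_le_ncard _ hf
    rintro _ ⟨⟨c, hc⟩, rfl⟩
    have hc' := Subgroup.mem_centralizer_singleton_iff.1 hc
    change x • (c • p) = c • p
    rw [smul_smul]
    first
      | rw [hc', mul_smul, hp]
      | rw [← hc', mul_smul, hp]
  · apply Nat.card_le_card_of_injective
      (fun c : stabilizer (Subgroup.centralizer {x}) p =>
        (⟨c.1.1, c.2⟩ : stabilizer H p))
    intro a b hab
    exact Subtype.ext (Subtype.ext (Subtype.mk.inj hab))

lemma case60 {H P : Type*} [Group H] [Finite H] [MulAction H P]
    (h2 : ∀ h : H, h ≠ 1 → (fixedBy P h).ncard = 2) (hN : Nat.card H = 60)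
    (p₁ : P) (hp₁ : Nat.card (stabilizer H p₁) = 2)
    (horb : ∀ p : P, Nat.card (stabilizer H p) = 2 → p ∈ orbit H p₁)
    (hst : ∀ p : P, Nat.card (stabilizer H p) = 2 ∨ Nat.card (stabilizer H p) = 3 ∨
      Nat.card (stabilizer H p) = 5) :
    StablePair H P ∨ Nonempty (H ≃* alternatingGroup (Fin 5)) := by
  have : Fact (Nat.Prime 2) := ⟨Nat.prime_two⟩
  -- elements of even order
  have heven : ∀ x : H, 2 ∣ orderOf x → x ≠ 1 → ∀ p : P, x • p = p → Nat.card (stabilizer H p) = 2 := by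
    intro x hx hx1 p hp
    have h1 : orderOf (⟨x, mem_stabilizer_iff.2 hp⟩ : stabilizer H p) ∣ Nat.card (stabilizer H p) := orderOf_dvd_natCard _
    rw [Subgroup.orderOf_mk] at h1
    have := hx.trans h1
    rcases hst p with h | h | h <;> omega
  have hord : ∀ x : H, 2 ∣ orderOf x → x ≠ 1 → orderOf x = 2 := by
    intro x hx hx1
    obtain ⟨p, hp⟩ := exists_fixed h2 x hx1
    have h1 : orderOf (⟨x, mem_stabilizer_iff.2 hp⟩ : stabilizer H p) ∣ Nat.card (stabilizer H p) := orderOf_dvd_natCard _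
    rw [Subgroup.orderOf_mk, heven x hx hx1 p hp] at h1
    exact Nat.dvd_antisymm h1 hx
  have hne : ∀ x : H, orderOf x = 2 → x ≠ 1 := by
    rintro x hx rfl
    simp at hx
  have hcent : ∀ x : H, orderOf x = 2 → Nat.card (Subgroup.centralizer {x}) ≤ 4 := by
    intro x hx
    obtain ⟨p, hp⟩ := exists_fixed h2 x (hne x hx)
    have := card_centralizer_le h2 x (hne x hx) p hp
    rw [heven x (by rw [hx]) (hne x hx) p hp] at this
    omega
  have hS : ∀ S : Sylow 2 H, Nat.card S = 4 := by
    intro S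
    have h1 := S.card_mul_index
    have h3 := S.not_dvd_index
    obtain ⟨k, hk⟩ := S.isPGroup'.exists_card_eq
    have hk' : Nat.card S = 2 ^ k := hk
    have : k < 3 := by
      by_contra hlt
      have : 2 ^ 3 ∣ Nat.card H := (pow_dvd_pow 2 (not_lt.1 hlt)).trans (hk ▸ Subgroup.card_subgroup_dvd_card _)
      omega
    rw [hk', hN] at h1
    rw [hk']
    have h3' : ¬ 2 ∣ (S : Subgroup H).index := h3
    interval_cases k <;> omega
  have hSo : ∀ (S : Sylow 2 H) (x : H), x ∈ S → x ≠ 1 → orderOf x = 2 := by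
    intro S x hx hx1
    apply hord x _ hx1
    have h1 : orderOf (⟨x, hx⟩ : (S : Subgroup H)) ∣ Nat.card S := orderOf_dvd_natCard _
    rw [Subgroup.orderOf_mk, hS S] at h1
    have h3 : orderOf x ≠ 1 := by simpa using hx1
    have hle := Nat.le_of_dvd (by norm_num) h1
    generalize orderOf x = c at *
    interval_cases c <;> omega
  have hSc : ∀ (S : Sylow 2 H) (x : H), x ∈ S → x ≠ 1 → (S : Subgroup H) = Subgroup.centralizer {x} := by
    intro S x hx hx1
    apply Subgroup.eq_of_le_of_card_ge
    · intro y hy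
      rw [Subgroup.mem_centralizer_singleton_iff]
      have := IsPGroup.isMulCommutative_of_card_eq_prime_sq (p := 2) (G := (S : Subgroup H)) (by simpa using hS S)
      have h5 := mul_comm' (⟨y, hy⟩ : (S : Subgroup H)) ⟨x, hx⟩
      simpa using congrArg Subtype.val h5
    · exact (hcent x (hSo S x hx hx1)).trans (hS S).ge
  have hex : ∀ x : H, orderOf x = 2 → ∃ S : Sylow 2 H, x ∈ S := by
    intro x hx
    have hz : IsPGroup 2 (Subgroup.zpowers (x : H)) :=
      IsPGroup.of_card (n := 1) (by simp [Nat.card_zpowers, hx])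
    obtain ⟨Q, hQ⟩ := hz.exists_le_sylow
    exact ⟨Q, hQ (Subgroup.mem_zpowers x)⟩
  -- all involutions are conjugate
  obtain ⟨x₁, hx₁⟩ := exists_prime_orderOf_dvd_card' (G := stabilizer H p₁) 2 (by rw [hp₁])
  have hx₁o : orderOf (x₁ : H) = 2 := by simpa using hx₁
  have hconj : ∀ x : H, orderOf x = 2 → IsConj (x₁ : H) x := by
    intro x hx
    obtain ⟨p, hp⟩ := exists_fixed h2 x (hne x hx)
    obtain ⟨g, hg⟩ := horb p (heven x (by rw [hx]) (hne x hx) p hp)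
    have hg' : g • p₁ = p := hg
    have hm : g⁻¹ * x * g ∈ stabilizer H p₁ := by
      rw [mem_stabilizer_iff, mul_smul, mul_smul, hg', hp, ← hg', inv_smul_smul]
    have hx1 : x₁ ≠ 1 := by rintro rfl; simp at hx₁
    have hm1 : (⟨_, hm⟩ : stabilizer H p₁) ≠ 1 := by
      intro h
      have h' : g⁻¹ * x * g = 1 := congrArg Subtype.val h
      apply hne x hx
      have : x = g * (g⁻¹ * x * g) * g⁻¹ := by group
      rw [this, h']; group
    have hcd : Nat.card (stabilizer H p₁) = 2 := hp₁
    have : (⟨_, hm⟩ : stabilizer H p₁) = x₁ := by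
      obtain ⟨y, -, hy⟩ := (Nat.card_eq_two_iff' (1 : stabilizer H p₁)).1 hcd |>.exists.elim
        (fun y hy => (⟨y, hy, fun z hz => ExistsUnique.unique ((Nat.card_eq_two_iff' (1 : stabilizer H p₁)).1 hcd) hz hy⟩ :
          ∃ y : stabilizer H p₁, y ≠ 1 ∧ ∀ z : stabilizer H p₁, z ≠ 1 → z = y))
      rw [hy _ hm1, hy _ hx1]
    rw [isConj_iff]
    refine ⟨g, ?_⟩
    rw [← this]
    group
  have hI : Nat.card {x : H // orderOf x = 2} = 15 := by
    have e : {x : H | orderOf x = 2} = orbit (ConjAct H) (x₁ : H) := by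
      ext x
      rw [ConjAct.mem_orbit_conjAct]
      constructor
      · intro hx; exact (hconj x hx).symm
      · intro hx
        obtain ⟨c, hc⟩ := isConj_iff.1 hx.symm
        change orderOf x = 2
        rw [← hc, ← hx₁o]
        exact (MulAut.conj c).orderOf_eq (x₁ : H)
    have h3 : Nat.card (Subgroup.centralizer {(x₁ : H)}) = 4 := by
      obtain ⟨S, hxS⟩ := hex _ hx₁o
      rw [← hSc S _ hxS (hne _ hx₁o)]
      exact hS S
    change Nat.card {x : H | orderOf x = 2} = 15
    rw [e]
    have h1 := Nat.card_congr (MulAction.orbitProdStabilizerEquivGroup (ConjAct H) (x₁ : H))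
    have h5 : Nat.card (ConjAct H) = 60 := hN
    rw [Nat.card_prod, ← Subgroup.nat_card_centralizer_nat_card_stabilizer, h3, h5] at h1
    omega
  have hn2 : Nat.card (Sylow 2 H) = 5 := by
    have hb : Function.Bijective (fun s : (Σ S : Sylow 2 H, {x : S // x ≠ 1}) =>
        (⟨s.2.1.1, hSo s.1 _ s.2.1.2 (fun h => s.2.2 (Subtype.ext h))⟩ : {x : H // orderOf x = 2})) := by
      constructor
      · rintro ⟨S, ⟨x, hx⟩, hx1⟩ ⟨T, ⟨y, hy⟩, hy1⟩ h
        have hxy : x = y := congrArg Subtype.val h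
        subst hxy
        have hx1' : x ≠ 1 := fun h => hx1 (Subtype.ext h)
        have : S = T := Sylow.ext (by
          rw [hSc S x hx hx1', hSc T x hy hx1'])
        subst this
        rfl
      · rintro ⟨x, hx⟩
        obtain ⟨S, hxS⟩ := hex x hx
        exact ⟨⟨S, ⟨x, hxS⟩, fun h => hne x hx (congrArg Subtype.val h)⟩, rfl⟩
    have h1 := Nat.card_congr (Equiv.ofBijective _ hb)
    rw [hI] at h1
    have := Fintype.ofFinite (Sylow 2 H)
    rw [Nat.card_sigma] at h1
    have h3 : ∀ S : Sylow 2 H, Nat.card {x : S // x ≠ 1} = 3 := by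
      intro S
      have h4 := Set.ncard_compl ({1} : Set S)
      rw [Set.ncard_singleton, hS S] at h4
      exact h4
    simp only [h3, Finset.sum_const, smul_eq_mul, Finset.card_univ] at h1
    rw [Nat.card_eq_fintype_card]
    omega
  by_cases hinj : Function.Injective (toPermHom H (Sylow 2 H))
  · exact Or.inr (iso_alt_of_inj hn2 _ hinj (by rw [hN]; rfl))
  left
  set K := (toPermHom H (Sylow 2 H)).ker with hKdef
  have hKn : K.Normal := MonoidHom.normal_ker _
  have hKb : K ≠ ⊥ := fun h => hinj ((MonoidHom.ker_eq_bot_iff _).1 h)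
  let S : Sylow 2 H := default
  have hnc : Nat.card (Subgroup.normalizer (S : Set H)) = 12 := by
    have h1 := (Subgroup.normalizer (S : Set H)).card_mul_index
    have h3 := S.card_eq_index_normalizer
    rw [hn2] at h3
    rw [← h3] at h1
    omega
  have hKd : Nat.card K ∣ 12 := hnc ▸ (Subgroup.card_dvd_of_le (sylow_ker_le S))
  have hle := Nat.le_of_dvd (by norm_num) hKd
  have hK2 : ¬ 2 ∣ Nat.card K := by
    intro h
    obtain ⟨x, hx⟩ := exists_prime_orderOf_dvd_card' 2 h
    have hxo : orderOf (x : H) = 2 := by simpa using hx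
    have hall : ∀ y : H, orderOf y = 2 → y ∈ K := by
      intro y hy
      obtain ⟨c, hc⟩ := isConj_iff.1 ((hconj _ hxo).symm.trans (hconj y hy))
      rw [← hc]
      exact hKn.conj_mem _ x.2 c
    have : Nat.card {x : H // orderOf x = 2} ≤ Nat.card K :=
      Nat.card_le_card_of_injective (fun y => (⟨y.1, hall _ y.2⟩ : K))
        (fun a b hab => Subtype.ext (Subtype.mk.inj hab))
    omega
  have hK3 : Nat.card K = 3 := by
    have hne1 : Nat.card K ≠ 1 := fun h => hKb (Subgroup.card_eq_one.1 h)
    generalize Nat.card K = c at *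
    interval_cases c <;> omega
  exact stablePair_of_normal h2 3 (by norm_num) K hKn hK3

lemma orbit_arith (N a b c x y z : ℕ) (ha : a * x = N) (hb : b * y = N) (hc : c * z = N)
    (hx : 2 ≤ x) (hy : 2 ≤ y) (hz : 2 ≤ z) (hxy : x ≤ y) (hyz : y ≤ z) (hs : a + b + c = N + 2) :
    c = 2 ∨ (x = 2 ∧ y = 3 ∧ ((z = 3 ∧ N = 12) ∨ (z = 4 ∧ N = 24) ∨ (z = 5 ∧ N = 60))) := by
  have hx2 : x = 2 := by
    by_contra h
    have h3 : 3 ≤ x := by omega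
    have : a * 3 ≤ N := ha ▸ Nat.mul_le_mul_left a h3
    have : b * 3 ≤ N := hb ▸ Nat.mul_le_mul_left b (by omega)
    have : c * 3 ≤ N := hc ▸ Nat.mul_le_mul_left c (by omega)
    omega
  subst hx2
  have hy3 : y ≤ 3 := by
    by_contra h
    have : b * 4 ≤ N := hb ▸ Nat.mul_le_mul_left b (by omega)
    have : c * 4 ≤ N := hc ▸ Nat.mul_le_mul_left c (by omega)
    omega
  have : y = 2 ∨ y = 3 := by omega
  rcases this with rfl | rfl
  · left; omega
  right
  have hz5 : z < 6 := by
    by_contra h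
    have : c * 6 ≤ N := hc ▸ Nat.mul_le_mul_left c (by omega)
    omega
  interval_cases z <;> omega

lemma orbit_card_mul {H P : Type*} [Group H] [MulAction H P] (p : P) :
    Nat.card (orbit H p) * Nat.card (stabilizer H p) = Nat.card H := by
  rw [← Nat.card_prod]
  exact Nat.card_congr (MulAction.orbitProdStabilizerEquivGroup H p)

lemma stablePair_of_orbit_two {H P : Type*} [Group H] [MulAction H P]
    (h2 : ∀ h : H, h ≠ 1 → (fixedBy P h).ncard = 2) (p : P) (h : H) (h1 : h ≠ 1) (hp : h • p = p)
    (hc : Nat.card (orbit H p) = 2) : StablePair H P := by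
  have hc' : (orbit H p).ncard = 2 := by rwa [← Nat.card_coe_set_eq]
  have hfix : ∀ q ∈ orbit H p, h • q = q := by
    intro q hq
    obtain ⟨a, b, hab, hO⟩ := Set.ncard_eq_two.1 hc'
    have hpO : p ∈ orbit H p := mem_orbit_self p
    by_cases hqp : q = p
    · rw [hqp, hp]
    have hhq : h • q ∈ orbit H p := (mem_orbit_of_mem_orbit h hq)
    have hne : h • q ≠ p := by
      intro h'
      apply hqp
      rw [← hp] at h'
      exact smul_left_cancel h h'
    rw [hO] at hq hhq hpO
    simp only [Set.mem_insert_iff, Set.mem_singleton_iff] at hq hhq hpO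
    rcases hq with rfl | rfl <;> rcases hhq with h3 | h3 <;> rcases hpO with rfl | rfl <;> simp_all
  have key : ∀ g : H, fixedBy P (g * h * g⁻¹) = orbit H p := by
    intro g
    have hne : g * h * g⁻¹ ≠ 1 := by simpa using h1
    have hf : (fixedBy P (g * h * g⁻¹)).Finite :=
      Set.finite_of_ncard_ne_zero (by rw [h2 _ hne]; simp)
    symm
    apply Set.eq_of_subset_of_ncard_le _ _ hf
    · intro q hq
      change (g * h * g⁻¹) • q = q
      rw [mul_smul, mul_smul, hfix _ (mem_orbit_of_mem_orbit g⁻¹ hq), smul_inv_smul]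
    · rw [h2 _ hne, hc']
  refine ⟨h, h1, fun g => ?_⟩
  rw [key g, ← key 1]
  simp

def Concl (H P : Type*) [Group H] [MulAction H P] : Prop :=
  StablePair H P ∨ Nonempty (H ≃* alternatingGroup (Fin 4)) ∨
    Nonempty (H ≃* Equiv.Perm (Fin 4)) ∨ Nonempty (H ≃* alternatingGroup (Fin 5))

lemma three_orbits {H P : Type*} [Group H] [Finite H] [MulAction H P]
    (h2 : ∀ h : H, h ≠ 1 → (fixedBy P h).ncard = 2)
    (hst : ∀ p : P, ∃ h : H, h ≠ 1 ∧ h • p = p)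
    (a b c : P) (hall : ∀ p : P, p ∈ orbit H a ∨ p ∈ orbit H b ∨ p ∈ orbit H c)
    (hs : Nat.card (orbit H a) + Nat.card (orbit H b) + Nat.card (orbit H c) = Nat.card H + 2)
    (hab : Nat.card (stabilizer H a) ≤ Nat.card (stabilizer H b))
    (hbc : Nat.card (stabilizer H b) ≤ Nat.card (stabilizer H c)) :
    Concl H P := by
  have hs2 : ∀ p : P, 2 ≤ Nat.card (stabilizer H p) := by
    intro p
    obtain ⟨h, h1, hp⟩ := hst p
    have : Nontrivial (stabilizer H p) :=
      ⟨⟨⟨h, mem_stabilizer_iff.2 hp⟩, 1, fun h' => h1 (congrArg Subtype.val h')⟩⟩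
    exact Finite.one_lt_card
  have hN : 0 < Nat.card H := Nat.card_pos
  rcases orbit_arith _ _ _ _ _ _ _ (orbit_card_mul (H := H) a) (orbit_card_mul (H := H) b)
    (orbit_card_mul (H := H) c) (hs2 a) (hs2 b) (hs2 c) hab hbc hs with
    h | ⟨hx, hy, ⟨hz, hN⟩ | ⟨hz, hN⟩ | ⟨hz, hN⟩⟩
  · obtain ⟨h', h1, hp⟩ := hst c
    exact Or.inl (stablePair_of_orbit_two h2 c h' h1 hp h)
  · rcases case12 h2 hN with h | h
    · exact Or.inl h
    · exact Or.inr (Or.inl h)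
  · rcases case24 h2 hN with h | h
    · exact Or.inl h
    · exact Or.inr (Or.inr (Or.inl h))
  · have hcs : ∀ p q : P, p ∈ orbit H q → Nat.card (stabilizer H p) = Nat.card (stabilizer H q) := by
      intro p q hpq
      have h3 := orbit_card_mul (H := H) p
      have h4 := orbit_card_mul (H := H) q
      rw [orbit_eq_iff.2 hpq, ← h4] at h3
      have : 0 < Nat.card (orbit H q) := by
        by_contra h0
        rw [Nat.eq_zero_of_not_pos h0] at h4
        omega
      exact Nat.eq_of_mul_eq_mul_left this h3
    have hgoal := case60 h2 hN a hx ?_ ?_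
    · rcases hgoal with h | h
      · exact Or.inl h
      · exact Or.inr (Or.inr (Or.inr h))
    · intro p hp
      rcases hall p with h | h | h
      · exact h
      · have := hcs _ _ h; omega
      · have := hcs _ _ h; omega
    · intro p
      rcases hall p with h | h | h <;> have := hcs _ _ h <;> omega

theorem classify {H P : Type*} [Group H] [Finite H] [MulAction H P] [Finite P] [Nontrivial H]
    (h2 : ∀ h : H, h ≠ 1 → (fixedBy P h).ncard = 2)
    (hst : ∀ p : P, ∃ h : H, h ≠ 1 ∧ h • p = p) : Concl H P := by
  classical
  have := Fintype.ofFinite H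
  have := Fintype.ofFinite P
  let Ω := Quotient (orbitRel H P)
  have : Fintype Ω := Fintype.ofFinite _
  have hB := sum_card_fixedBy_eq_card_orbits_mul_card_group H P
  rw [← Finset.add_sum_erase _ _ (Finset.mem_univ (1 : H))] at hB
  have h3 : ∀ g ∈ Finset.univ.erase (1 : H), Fintype.card (fixedBy P g) = 2 := by
    intro g hg
    rw [← h2 g (Finset.ne_of_mem_erase hg), ← Nat.card_eq_fintype_card, Nat.card_coe_set_eq]
  rw [Finset.sum_congr rfl h3, Finset.sum_const, Finset.card_erase_of_mem (Finset.mem_univ _),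
    Finset.card_univ, smul_eq_mul] at hB
  have hP1 : Fintype.card (fixedBy P (1 : H)) = Nat.card P := by
    rw [← Nat.card_eq_fintype_card, Nat.card_coe_set_eq, fixedBy_one_eq_univ, Set.ncard_univ]
  rw [hP1, ← Nat.card_eq_fintype_card (α := H)] at hB
  change _ = Fintype.card Ω * _ at hB
  have hPs : Nat.card P = ∑ ω : Ω, Nat.card (orbit H ω.out) := by
    rw [Nat.card_congr (selfEquivSigmaOrbits H P), Nat.card_sigma]
  have hhalf : ∀ p : P, 2 * Nat.card (orbit H p) ≤ Nat.card H := by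
    intro p
    obtain ⟨h, h1, hp⟩ := hst p
    have : Nontrivial (stabilizer H p) :=
      ⟨⟨⟨h, mem_stabilizer_iff.2 hp⟩, 1, fun h' => h1 (congrArg Subtype.val h')⟩⟩
    have h5 : 1 < Nat.card (stabilizer H p) := Finite.one_lt_card
    rw [← orbit_card_mul (H := H) p, mul_comm]
    exact Nat.mul_le_mul_left _ h5
  have hle : 2 * Nat.card P ≤ Fintype.card Ω * Nat.card H := by
    rw [hPs, Finset.mul_sum]
    refine (Finset.sum_le_sum (fun ω _ => hhalf ω.out)).trans ?_
    simp
  have hN : 1 < Nat.card H := Finite.one_lt_card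
  obtain ⟨h₀, hh₀⟩ := exists_ne (1 : H)
  have hP2 : 2 ≤ Nat.card P := by
    rw [← h2 h₀ hh₀, ← Set.ncard_univ]
    exact Set.ncard_le_ncard (Set.subset_univ _)
  have hr4 : Fintype.card Ω < 4 := by
    by_contra h
    have : 4 * Nat.card H ≤ Fintype.card Ω * Nat.card H := Nat.mul_le_mul_right _ (not_lt.1 h)
    omega
  have hr2 : 2 ≤ Fintype.card Ω := by
    by_contra h
    have : Fintype.card Ω * Nat.card H ≤ 1 * Nat.card H := Nat.mul_le_mul_right _ (by omega)
    omega
  have : Fintype.card Ω = 2 ∨ Fintype.card Ω = 3 := by omega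
  rcases this with hr | hr
  · left
    rw [hr] at hB
    have hPc : Nat.card P = 2 := by omega
    have key : ∀ g : H, g ≠ 1 → fixedBy P g = Set.univ := by
      intro g hg
      apply Set.eq_of_subset_of_ncard_le (Set.subset_univ _)
      rw [h2 g hg, Set.ncard_univ, hPc]
    refine ⟨h₀, hh₀, fun g => ?_⟩
    rw [key _ hh₀, key _ (by simpa using hh₀)]
  · have hr' : (Finset.univ : Finset Ω).card = 3 := by rw [Finset.card_univ, hr]
    obtain ⟨a, b, c, hab, hac, hbc, hu⟩ := Finset.card_eq_three.1 hr'
    rw [hr] at hB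
    rw [hPs, hu, Finset.sum_insert (by simp [hab, hac]), Finset.sum_pair hbc] at hB
    have hall : ∀ p : P, p ∈ orbit H a.out ∨ p ∈ orbit H b.out ∨ p ∈ orbit H c.out := by
      intro p
      have hm : (Quotient.mk _ p : Ω) ∈ (Finset.univ : Finset Ω) := Finset.mem_univ _
      rw [hu] at hm
      simp only [Finset.mem_insert, Finset.mem_singleton] at hm
      have hh : ∀ ω : Ω, (Quotient.mk _ p : Ω) = ω → p ∈ orbit H ω.out := by
        rintro ω rfl
        exact orbitRel_apply.1 ((orbitRel H P).symm (Quotient.mk_out (s := orbitRel H P) p))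
      rcases hm with h | h | h
      · exact Or.inl (hh _ h)
      · exact Or.inr (Or.inl (hh _ h))
      · exact Or.inr (Or.inr (hh _ h))
    generalize a.out = a at *
    generalize b.out = b at *
    generalize c.out = c at *
    have hall' : ∀ p : P, ∀ Q : Prop, (p ∈ orbit H a → Q) → (p ∈ orbit H b → Q) →
        (p ∈ orbit H c → Q) → Q := fun p Q h1 h2 h3 => by
      rcases hall p with h | h | h
      exacts [h1 h, h2 h, h3 h]
    rcases le_total (Nat.card (stabilizer H a)) (Nat.card (stabilizer H b)) with h1 | h1 <;>
    rcases le_total (Nat.card (stabilizer H b)) (Nat.card (stabilizer H c)) with h4 | h4 <;>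
    rcases le_total (Nat.card (stabilizer H a)) (Nat.card (stabilizer H c)) with h5 | h5
    · exact three_orbits h2 hst a b c (by tauto) (by omega) h1 h4
    · exact three_orbits h2 hst a b c (by tauto) (by omega) h1 h4
    · exact three_orbits h2 hst a c b (by intro p; have := hall p; tauto) (by omega) h5 h4
    · exact three_orbits h2 hst c a b (by intro p; have := hall p; tauto) (by omega) h5 h1
    · exact three_orbits h2 hst b a c (by intro p; have := hall p; tauto) (by omega) h1 h5
    · exact three_orbits h2 hst b c a (by intro p; have := hall p; tauto) (by omega) h4 h5
    · exact three_orbits h2 hst c b a (by intro p; have := hall p; tauto) (by omega) h4 h1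
    · exact three_orbits h2 hst c b a (by intro p; have := hall p; tauto) (by omega) h4 h1

/-- Version for an arbitrary (possibly infinite) set. -/
theorem classify' {H X : Type*} [Group H] [Finite H] [MulAction H X] [Nontrivial H]
    (h2 : ∀ h : H, h ≠ 1 → (fixedBy X h).ncard = 2) : Concl H X := by
  let S : SubMulAction H X :=
    { carrier := {p | ∃ h : H, h ≠ 1 ∧ h • p = p}
      smul_mem' := by
        rintro g p ⟨h, h1, hp⟩
        refine ⟨g * h * g⁻¹, by simpa using h1, ?_⟩
        rw [mul_smul, mul_smul, inv_smul_smul, hp] }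
  have hSf : (S : Set X).Finite := by
    have : (S : Set X) = ⋃ h : {h : H // h ≠ 1}, fixedBy X h.1 := by
      ext p
      simp only [Set.mem_iUnion, mem_fixedBy]
      constructor
      · rintro ⟨h, h1, hp⟩; exact ⟨⟨h, h1⟩, hp⟩
      · rintro ⟨⟨h, h1⟩, hp⟩; exact ⟨h, h1, hp⟩
    rw [this]
    apply Set.finite_iUnion
    rintro ⟨h, h1⟩
    exact Set.finite_of_ncard_ne_zero (by rw [h2 _ h1]; simp)
  have : Finite S := hSf
  have him : ∀ h : H, h ≠ 1 → (Subtype.val '' (fixedBy S h)) = fixedBy X h := by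
    intro h h1
    ext p
    constructor
    · rintro ⟨q, hq, rfl⟩
      exact congrArg Subtype.val hq
    · intro hp
      exact ⟨⟨p, h, h1, hp⟩, Subtype.ext hp, rfl⟩
  have h2' : ∀ h : H, h ≠ 1 → (fixedBy S h).ncard = 2 := by
    intro h h1
    rw [← h2 h h1, ← him h h1, Set.ncard_image_of_injective _ Subtype.val_injective]
  rcases classify h2' (fun p => by
    obtain ⟨h, h1, hp⟩ := p.2
    exact ⟨h, h1, Subtype.ext hp⟩) with ⟨h, h1, hg⟩ | h
  · refine Or.inl ⟨h, h1, fun g => ?_⟩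
    rw [← him h h1, ← him (g * h * g⁻¹) (by simpa using h1), hg g]
  · exact Or.inr h

end

section MatrixPart

variable {K : Type*} [Field K]

lemma gl_det_ne (A : GL (Fin 2) K) : A 0 0 * A 1 1 - A 0 1 * A 1 0 ≠ 0 := by
  have := A.det_ne_zero
  rwa [Matrix.det_fin_two] at this

lemma gl_center_iff (g : GL (Fin 2) K) :
    g ∈ Subgroup.center (GL (Fin 2) K) ↔ g 0 1 = 0 ∧ g 1 0 = 0 ∧ g 0 0 = g 1 1 := by
  rw [Matrix.GeneralLinearGroup.mem_center_iff_val_mem_range_scalar]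
  constructor
  · rintro ⟨c, hc⟩
    have h : ∀ i j, g i j = Matrix.scalar (Fin 2) c i j := fun i j => by rw [hc]
    simp [h]
  · rintro ⟨h1, h2, h3⟩
    refine ⟨g 0 0, ?_⟩
    ext i j
    fin_cases i <;> fin_cases j <;> simp [h1, h2, h3]

/-- Conjugation by an intertwiner. -/
lemma conj_of_intertwine (A : GL (Fin 2) K) (P D : Matrix (Fin 2) (Fin 2) K) (hP : P.det ≠ 0)
    (h : (A : Matrix (Fin 2) (Fin 2) K) * P = P * D) :
    ∃ x : GL (Fin 2) K, ((x * A * x⁻¹ : GL (Fin 2) K) : Matrix (Fin 2) (Fin 2) K) = D := by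
  let y : GL (Fin 2) K := Matrix.GeneralLinearGroup.mkOfDetNeZero P hP
  have hy : (y : Matrix (Fin 2) (Fin 2) K) = P := rfl
  refine ⟨y⁻¹, ?_⟩
  rw [inv_inv, mul_assoc, Units.val_mul, Units.val_mul, hy, h, ← mul_assoc, ← hy, ← Units.val_mul,
    inv_mul_cancel, Units.val_one, one_mul]

lemma exists_conj_diag (A : GL (Fin 2) K) (u v : K) (huv : u ≠ v)
    (ht : A 0 0 + A 1 1 = u + v) (hd : A 0 0 * A 1 1 - A 0 1 * A 1 0 = u * v) :
    ∃ x : GL (Fin 2) K, (x * A * x⁻¹) 0 1 = 0 ∧ (x * A * x⁻¹) 1 0 = 0 := by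
  have huv' : u - v ≠ 0 := sub_ne_zero.2 huv
  by_cases hc : A 1 0 = 0
  · by_cases hb : A 0 1 = 0
    · exact ⟨1, by simpa using ⟨hb, hc⟩⟩
    · obtain ⟨x, hx⟩ := conj_of_intertwine A !![A 0 1, A 0 1; u - A 0 0, v - A 0 0] !![u, 0; 0, v]
        (by
          rw [Matrix.det_fin_two_of]
          have : A 0 1 * (v - A 0 0) - A 0 1 * (u - A 0 0) = - (A 0 1 * (u - v)) := by ring
          rw [this]
          exact neg_ne_zero.2 (mul_ne_zero hb huv'))
        (by
          ext i j
          fin_cases i <;> fin_cases j <;> simp [Matrix.mul_apply, Fin.sum_univ_two] <;> grind)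
      exact ⟨x, by rw [hx]; simp, by rw [hx]; simp⟩
  · obtain ⟨x, hx⟩ := conj_of_intertwine A !![u - A 1 1, v - A 1 1; A 1 0, A 1 0] !![u, 0; 0, v]
      (by
        rw [Matrix.det_fin_two_of]
        have : (u - A 1 1) * A 1 0 - (v - A 1 1) * A 1 0 = A 1 0 * (u - v) := by ring
        rw [this]
        exact mul_ne_zero hc huv')
      (by
        ext i j
        fin_cases i <;> fin_cases j <;> simp [Matrix.mul_apply, Fin.sum_univ_two] <;> grind)
    exact ⟨x, by rw [hx]; simp, by rw [hx]; simp⟩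

lemma conj_trace (x A : GL (Fin 2) K) :
    (x * A * x⁻¹) 0 0 + (x * A * x⁻¹) 1 1 = A 0 0 + A 1 1 := by
  rw [← Matrix.trace_fin_two, ← Matrix.trace_fin_two, Units.val_mul, Matrix.trace_mul_comm,
    ← Units.val_mul, ← mul_assoc, inv_mul_cancel, one_mul]

lemma conj_det (x A : GL (Fin 2) K) :
    (x * A * x⁻¹) 0 0 * (x * A * x⁻¹) 1 1 - (x * A * x⁻¹) 0 1 * (x * A * x⁻¹) 1 0
      = A 0 0 * A 1 1 - A 0 1 * A 1 0 := by
  rw [← Matrix.det_fin_two, ← Matrix.det_fin_two, Units.val_mul, Matrix.det_mul_comm,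
    ← Units.val_mul, ← mul_assoc, inv_mul_cancel, one_mul]

lemma gl_ext4 {A B : GL (Fin 2) K} (h00 : A 0 0 = B 0 0) (h01 : A 0 1 = B 0 1)
    (h10 : A 1 0 = B 1 0) (h11 : A 1 1 = B 1 1) : A = B := by
  apply Units.ext
  ext i j
  fin_cases i <;> fin_cases j <;> assumption

lemma gl_mul00 (A B : GL (Fin 2) K) : (A * B) 0 0 = A 0 0 * B 0 0 + A 0 1 * B 1 0 := by
  simp [Matrix.mul_apply, Fin.sum_univ_two]
lemma gl_mul01 (A B : GL (Fin 2) K) : (A * B) 0 1 = A 0 0 * B 0 1 + A 0 1 * B 1 1 := by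
  simp [Matrix.mul_apply, Fin.sum_univ_two]
lemma gl_mul10 (A B : GL (Fin 2) K) : (A * B) 1 0 = A 1 0 * B 0 0 + A 1 1 * B 1 0 := by
  simp [Matrix.mul_apply, Fin.sum_univ_two]
lemma gl_mul11 (A B : GL (Fin 2) K) : (A * B) 1 1 = A 1 0 * B 0 1 + A 1 1 * B 1 1 := by
  simp [Matrix.mul_apply, Fin.sum_univ_two]

lemma conj_center {G : Type*} [Group G] {x g : G} (h : x * g * x⁻¹ ∈ Subgroup.center G) :
    g ∈ Subgroup.center G := by
  have := (inferInstance : (Subgroup.center G).Normal).conj_mem _ h x⁻¹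
  simpa [mul_assoc] using this

section
variable [DecidableEq K]
open OnePoint MulAction

lemma smul_zero_iff (g : GL (Fin 2) K) :
    g • ((0 : K) : OnePoint K) = ((0 : K) : OnePoint K) ↔ g 0 1 = 0 := by
  rw [smul_some_eq_ite]
  have := gl_det_ne g
  simp only [mul_zero, zero_add]
  split_ifs with h
  · constructor
    · intro h'; exact absurd h' (infty_ne_coe _)
    · intro h'; rw [h, h'] at this; simp at this
  · rw [coe_eq_coe, div_eq_zero_iff]
    tauto

lemma fixedBy_diag (g : GL (Fin 2) K) (h1 : g 0 1 = 0) (h2 : g 1 0 = 0) (h3 : g 0 0 ≠ g 1 1) :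
    fixedBy (OnePoint K) g = {((0 : K) : OnePoint K), ∞} := by
  have hd := gl_det_ne g
  rw [h1, h2] at hd
  have h11 : g 1 1 ≠ 0 := by rintro h; simp [h] at hd
  ext p
  rw [mem_fixedBy]
  induction p using OnePoint.rec with
  | infty => simp [smul_infty_eq_self_iff, h2]
  | coe k =>
    rw [smul_some_eq_ite]
    simp only [h1, h2, zero_mul, zero_add, add_zero, h11, if_false, coe_eq_coe, Set.mem_insert_iff,
      Set.mem_singleton_iff, coe_ne_infty, or_false]
    rw [div_eq_iff h11]
    constructor
    · intro h
      have : k * (g 0 0 - g 1 1) = 0 := by linear_combination h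
      rcases mul_eq_zero.1 this with h | h
      · exact h
      · exact absurd (sub_eq_zero.1 h) h3
    · rintro rfl; simp

lemma fixedBy_conj_eq (x g : GL (Fin 2) K) :
    fixedBy (OnePoint K) (x * g * x⁻¹) = (fun p => x • p) '' fixedBy (OnePoint K) g := by
  ext p
  simp only [mem_fixedBy, Set.mem_image]
  constructor
  · intro h
    refine ⟨x⁻¹ • p, ?_, smul_inv_smul x p⟩
    rw [mul_smul, mul_smul] at h
    exact eq_inv_smul_iff.2 h
  · rintro ⟨q, hq, rfl⟩
    rw [mul_smul, mul_smul, inv_smul_smul, hq]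

lemma fixedBy_ncard (g x : GL (Fin 2) K) (h1 : (x * g * x⁻¹) 0 1 = 0) (h2 : (x * g * x⁻¹) 1 0 = 0)
    (h3 : (x * g * x⁻¹) 0 0 ≠ (x * g * x⁻¹) 1 1) : (fixedBy (OnePoint K) g).ncard = 2 := by
  have := fixedBy_diag _ h1 h2 h3
  rw [fixedBy_conj_eq] at this
  rw [← Set.ncard_image_of_injective _ (MulAction.injective x), this,
    Set.ncard_pair (coe_ne_infty 0)]

lemma commute_of_fixedBy (g g' x : GL (Fin 2) K) (h1 : (x * g * x⁻¹) 0 1 = 0)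
    (h2 : (x * g * x⁻¹) 1 0 = 0) (h3 : (x * g * x⁻¹) 0 0 ≠ (x * g * x⁻¹) 1 1)
    (h : fixedBy (OnePoint K) g' = fixedBy (OnePoint K) g) : Commute g' g := by
  have hf := fixedBy_diag _ h1 h2 h3
  rw [fixedBy_conj_eq, ← h, ← fixedBy_conj_eq] at hf
  have h0 : ((0 : K) : OnePoint K) ∈ fixedBy (OnePoint K) (x * g' * x⁻¹) := by rw [hf]; simp
  have hi : ∞ ∈ fixedBy (OnePoint K) (x * g' * x⁻¹) := by rw [hf]; simp
  have e0 := (smul_zero_iff _).1 h0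
  have ei := smul_infty_eq_self_iff.1 hi
  have hc : Commute (x * g' * x⁻¹) (x * g * x⁻¹) := by
    generalize x * g * x⁻¹ = A at *
    generalize x * g' * x⁻¹ = B at *
    apply gl_ext4
    · rw [gl_mul00, gl_mul00, h1, e0]; ring
    · rw [gl_mul01, gl_mul01, h1, e0]; ring
    · rw [gl_mul10, gl_mul10, h2, ei]; ring
    · rw [gl_mul11, gl_mul11, h2, ei]; ring
  have := (Commute.conj_iff x).1 hc
  exact this

lemma center_smul (g : GL (Fin 2) K) (hg : g ∈ Subgroup.center (GL (Fin 2) K)) (p : OnePoint K) :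
    g • p = p := by
  obtain ⟨h1, h2, h3⟩ := (gl_center_iff g).1 hg
  have hd := gl_det_ne g
  rw [h1, h2] at hd
  have h11 : g 1 1 ≠ 0 := by rintro h; simp [h] at hd
  induction p using OnePoint.rec with
  | infty => exact smul_infty_eq_self_iff.2 h2
  | coe k =>
    rw [smul_some_eq_ite]
    simp only [h1, h2, h3, zero_mul, zero_add, add_zero, h11, if_false, coe_eq_coe]
    field_simp

end

end MatrixPart

section Specific

variable {ℓ : ℕ} [Fact ℓ.Prime]

lemma two_ne_zero_zmod (hℓ : ℓ ≠ 2) : (2 : ZMod ℓ) ≠ 0 := by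
  intro h
  have h' : ((2 : ℕ) : ZMod ℓ) = 0 := by exact_mod_cast h
  rw [ZMod.natCast_eq_zero_iff] at h'
  exact hℓ ((Nat.prime_dvd_prime_iff_eq Fact.out Nat.prime_two).1 h')

lemma mul_nonsquare {a b : ZMod ℓ} (ha : ¬ IsSquare a) (hb : ¬ IsSquare b) : IsSquare (a * b) := by
  have ha0 : a ≠ 0 := by rintro rfl; simp at ha
  have hb0 : b ≠ 0 := by rintro rfl; simp at hb
  have h1 := quadraticChar_neg_one_iff_not_isSquare.2 ha
  have h2 := quadraticChar_neg_one_iff_not_isSquare.2 hb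
  rw [← quadraticChar_one_iff_isSquare (mul_ne_zero ha0 hb0), map_mul, h1, h2]
  norm_num

/-- an element that is locally in `N_sp` is diagonalizable or a nonsplit involution -/
lemma diag_or_nonsplit (hℓ : ℓ ≠ 2) (g : GL2 ℓ) (h : ∃ x : GL2 ℓ, InNsp (x * g * x⁻¹)) :
    (∃ x : GL2 ℓ, (x * g * x⁻¹) 0 1 = 0 ∧ (x * g * x⁻¹) 1 0 = 0) ∨
      (g 0 0 + g 1 1 = 0 ∧ ¬ IsSquare (-(g 0 0 * g 1 1 - g 0 1 * g 1 0))) := by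
  obtain ⟨x, hx | hx⟩ := h
  · exact Or.inl ⟨x, hx⟩
  by_cases hs : IsSquare (-(g 0 0 * g 1 1 - g 0 1 * g 1 0))
  · left
    obtain ⟨r, hr⟩ := hs
    have ht := conj_trace x g
    rw [show (x * g * x⁻¹) 0 0 = 0 from hx.1, show (x * g * x⁻¹) 1 1 = 0 from hx.2] at ht
    have hr0 : r ≠ 0 := by
      rintro rfl
      apply gl_det_ne g
      linear_combination -hr
    apply exists_conj_diag g r (-r)
    · intro h
      have : 2 * r = 0 := by linear_combination h
      exact (mul_ne_zero (two_ne_zero_zmod hℓ) hr0) this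
    · rw [← ht]; ring
    · linear_combination -hr
  · right
    refine ⟨?_, hs⟩
    have ht := conj_trace x g
    rw [show (x * g * x⁻¹) 0 0 = 0 from hx.1, show (x * g * x⁻¹) 1 1 = 0 from hx.2] at ht
    rw [← ht]; ring

lemma disc_ne (hℓ : ℓ ≠ 2) (g : GL2 ℓ) (h : ∃ x : GL2 ℓ, InNsp (x * g * x⁻¹))
    (hg : g ∉ Subgroup.center (GL2 ℓ)) :
    (g 0 0 + g 1 1) ^ 2 - 4 * (g 0 0 * g 1 1 - g 0 1 * g 1 0) ≠ 0 := by
  have h2 := two_ne_zero_zmod hℓ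
  rcases diag_or_nonsplit hℓ g h with ⟨x, h01, h10⟩ | ⟨ht, hd⟩
  · rw [← conj_trace x g, ← conj_det x g, h01, h10]
    intro h
    have : ((x * g * x⁻¹) 0 0 - (x * g * x⁻¹) 1 1) ^ 2 = 0 := by linear_combination h
    have := sub_eq_zero.1 (pow_eq_zero_iff (two_ne_zero)|>.1 this)
    exact hg (conj_center ((gl_center_iff _).2 ⟨h01, h10, this⟩))
  · rw [ht]
    intro h
    have h4 : (2 * 2) * (g 0 0 * g 1 1 - g 0 1 * g 1 0) = 0 := by linear_combination -h
    exact (mul_ne_zero (mul_ne_zero h2 h2) (gl_det_ne g)) h4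

noncomputable def toK (ℓ : ℕ) [Fact ℓ.Prime] : GL2 ℓ →* GL (Fin 2) (AlgebraicClosure (ZMod ℓ)) :=
  Matrix.GeneralLinearGroup.map (algebraMap (ZMod ℓ) (AlgebraicClosure (ZMod ℓ)))

lemma toK_apply (g : GL2 ℓ) (i j : Fin 2) :
    toK ℓ g i j = algebraMap (ZMod ℓ) (AlgebraicClosure (ZMod ℓ)) (g i j) := rfl

lemma toK_injective : Function.Injective (toK ℓ) := by
  intro a b h
  have hi := (algebraMap (ZMod ℓ) (AlgebraicClosure (ZMod ℓ))).injective
  have : ∀ i j, a i j = b i j := fun i j => hi (by rw [← toK_apply, ← toK_apply, h])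
  exact gl_ext4 (this _ _) (this _ _) (this _ _) (this _ _)

lemma exists_diag_K (hℓ : ℓ ≠ 2) (g : GL2 ℓ) (h : ∃ x : GL2 ℓ, InNsp (x * g * x⁻¹))
    (hg : g ∉ Subgroup.center (GL2 ℓ)) :
    ∃ x : GL (Fin 2) (AlgebraicClosure (ZMod ℓ)), (x * toK ℓ g * x⁻¹) 0 1 = 0 ∧
      (x * toK ℓ g * x⁻¹) 1 0 = 0 ∧ (x * toK ℓ g * x⁻¹) 0 0 ≠ (x * toK ℓ g * x⁻¹) 1 1 := by
  have hd := disc_ne hℓ g h hg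
  set φ := algebraMap (ZMod ℓ) (AlgebraicClosure (ZMod ℓ)) with hφ
  have h2 : (2 : AlgebraicClosure (ZMod ℓ)) ≠ 0 := by
    have := (map_ne_zero φ).2 (two_ne_zero_zmod hℓ)
    rwa [map_ofNat] at this
  have hd' : (toK ℓ g 0 0 + toK ℓ g 1 1) ^ 2 -
      4 * (toK ℓ g 0 0 * toK ℓ g 1 1 - toK ℓ g 0 1 * toK ℓ g 1 0) ≠ 0 := by
    have := (map_ne_zero φ).2 hd
    rwa [map_sub, map_pow, map_add, map_mul, map_ofNat, map_sub, map_mul, map_mul] at this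
  generalize toK ℓ g = A at *
  obtain ⟨s, hs⟩ := IsAlgClosed.exists_pow_nat_eq ((A 0 0 + A 1 1) ^ 2 -
      4 * (A 0 0 * A 1 1 - A 0 1 * A 1 0)) (n := 2) (by norm_num)
  have hs0 : s ≠ 0 := by
    rintro rfl
    apply hd'
    rw [← hs]; simp
  obtain ⟨x, hx1, hx2⟩ := exists_conj_diag A ((A 0 0 + A 1 1 + s) / 2) ((A 0 0 + A 1 1 - s) / 2)
    (by
      intro h
      field_simp at h
      have : 2 * s = 0 := by linear_combination h
      exact mul_ne_zero h2 hs0 this)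
    (by field_simp; ring)
    (by field_simp; linear_combination hs)
  refine ⟨x, hx1, hx2, fun h => hd' ?_⟩
  rw [← conj_trace x A, ← conj_det x A, hx1, hx2, h]
  ring

/-- If `m` is split and normalised by `G` up to its torus, then `G` is in a conjugate of `N_sp`. -/
lemma split_pair (G : Subgroup (GL2 ℓ)) (m : GL2 ℓ) (hm : m ∉ Subgroup.center (GL2 ℓ))
    (hs : ∃ x : GL2 ℓ, (x * m * x⁻¹) 0 1 = 0 ∧ (x * m * x⁻¹) 1 0 = 0)
    (hc : ∀ g ∈ G, Commute (g * m * g⁻¹) m) : ∃ x : GL2 ℓ, ∀ g ∈ G, InNsp (x * g * x⁻¹) := by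
  obtain ⟨x, h01, h10⟩ := hs
  have hne : (x * m * x⁻¹) 0 0 ≠ (x * m * x⁻¹) 1 1 := fun h =>
    hm (conj_center ((gl_center_iff _).2 ⟨h01, h10, h⟩))
  refine ⟨x, fun g hg => ?_⟩
  have hc' : Commute ((x * g * x⁻¹) * (x * m * x⁻¹) * (x * g * x⁻¹)⁻¹) (x * m * x⁻¹) := by
    have : (x * g * x⁻¹) * (x * m * x⁻¹) * (x * g * x⁻¹)⁻¹ = x * (g * m * g⁻¹) * x⁻¹ := by group
    rw [this]
    exact (Commute.conj_iff x).2 (hc g hg)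
  have hmul : ((x * g * x⁻¹) * (x * m * x⁻¹) * (x * g * x⁻¹)⁻¹) * (x * g * x⁻¹)
    = (x * g * x⁻¹) * (x * m * x⁻¹) := by group
  generalize (x * g * x⁻¹) * (x * m * x⁻¹) * (x * g * x⁻¹)⁻¹ = n at *
  generalize x * g * x⁻¹ = h at *
  generalize x * m * x⁻¹ = m' at *
  have hne' : m' 0 0 - m' 1 1 ≠ 0 := sub_ne_zero.2 hne
  have c01 : (n * m') 0 1 = (m' * n) 0 1 := by rw [hc'.eq]
  have c10 : (n * m') 1 0 = (m' * n) 1 0 := by rw [hc'.eq]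
  rw [gl_mul01, gl_mul01, h01] at c01
  rw [gl_mul10, gl_mul10, h10] at c10
  have n01 : n 0 1 = 0 := by
    have : n 0 1 * (m' 0 0 - m' 1 1) = 0 := by linear_combination -c01
    exact (mul_eq_zero.1 this).resolve_right hne'
  have n10 : n 1 0 = 0 := by
    have : n 1 0 * (m' 0 0 - m' 1 1) = 0 := by linear_combination c10
    exact (mul_eq_zero.1 this).resolve_right hne'
  have e00 : (n * h) 0 0 = (h * m') 0 0 := by rw [hmul]
  have e01 : (n * h) 0 1 = (h * m') 0 1 := by rw [hmul]
  have e10 : (n * h) 1 0 = (h * m') 1 0 := by rw [hmul]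
  have e11 : (n * h) 1 1 = (h * m') 1 1 := by rw [hmul]
  rw [gl_mul00, gl_mul00, n01, h10] at e00
  rw [gl_mul01, gl_mul01, n01, h01] at e01
  rw [gl_mul10, gl_mul10, n10, h10] at e10
  rw [gl_mul11, gl_mul11, n10, h01] at e11
  have hA : h 0 0 * h 0 1 = 0 := by
    have : (h 0 0 * h 0 1) * (m' 0 0 - m' 1 1) = 0 := by
      linear_combination h 0 0 * e01 - h 0 1 * e00
    exact (mul_eq_zero.1 this).resolve_right hne'
  have hB : h 1 0 * h 1 1 = 0 := by
    have : (h 1 0 * h 1 1) * (m' 0 0 - m' 1 1) = 0 := by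
      linear_combination h 1 0 * e11 - h 1 1 * e10
    exact (mul_eq_zero.1 this).resolve_right hne'
  have hd := gl_det_ne h
  rcases mul_eq_zero.1 hA with h1 | h1
  · right
    refine ⟨h1, ?_⟩
    rcases mul_eq_zero.1 hB with h2 | h2
    · rw [h1, h2] at hd; simp at hd
    · exact h2
  · left
    refine ⟨h1, ?_⟩
    rcases mul_eq_zero.1 hB with h2 | h2
    · exact h2
    · rw [h1, h2] at hd; simp at hd

/-- nonsplit case, in coordinates -/
lemma nonsplit_form (hℓ : ℓ ≠ 2) (δ r : ZMod ℓ) (hδ : ¬ IsSquare δ) (hr : r ≠ 0) (m g : GL2 ℓ)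
    (h00 : m 0 0 = 0) (h01 : m 0 1 = δ * r) (h10 : m 1 0 = r) (h11 : m 1 1 = 0)
    (hc : Commute (g * m * g⁻¹) m) :
    InCns δ g ∨ InNnsAnti δ g := by
  have hδ0 : δ ≠ 0 := by rintro rfl; simp at hδ
  have h2 := two_ne_zero_zmod hℓ
  have ht := conj_trace g m
  have hd := conj_det g m
  have hmul : (g * m * g⁻¹) * g = g * m := by group
  generalize g * m * g⁻¹ = n at *
  have c00 : (n * m) 0 0 = (m * n) 0 0 := by rw [hc.eq]
  have c01 : (n * m) 0 1 = (m * n) 0 1 := by rw [hc.eq]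
  rw [gl_mul00, gl_mul00, h00, h01, h10] at c00
  rw [gl_mul01, gl_mul01, h00, h01, h11] at c01
  rw [h00, h11] at ht
  rw [h00, h01, h10, h11] at hd
  have n01 : n 0 1 = δ * n 1 0 := mul_right_cancel₀ hr (by linear_combination c00)
  have n11 : n 1 1 = n 0 0 := by
    apply mul_right_cancel₀ (mul_ne_zero hδ0 hr)
    linear_combination -c01
  have n00 : n 0 0 = 0 := by
    apply (mul_eq_zero.1 (?_ : 2 * n 0 0 = 0)).resolve_left h2
    linear_combination ht - n11
  have hβ : (n 1 0 - r) * (n 1 0 + r) = 0 := by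
    apply mul_left_cancel₀ hδ0
    rw [n11, n00, n01] at hd
    linear_combination -hd
  have e00 : (n * g) 0 0 = (g * m) 0 0 := by rw [hmul]
  have e10 : (n * g) 1 0 = (g * m) 1 0 := by rw [hmul]
  rw [gl_mul00, gl_mul00, n01, h10, n00, h00] at e00
  rw [gl_mul10, gl_mul10, n11, n00, h10, h00] at e10
  rcases mul_eq_zero.1 hβ with hb | hb
  · left
    have hb' : n 1 0 = r := sub_eq_zero.1 hb
    rw [hb'] at e00 e10
    constructor
    · change g 1 1 = g 0 0
      apply mul_right_cancel₀ hr; linear_combination -e10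
    · change g 0 1 = δ * g 1 0
      apply mul_right_cancel₀ hr; linear_combination -e00
  · right
    have hb' : n 1 0 = -r := by linear_combination hb
    rw [hb'] at e00 e10
    constructor
    · change g 1 1 = - g 0 0
      apply mul_right_cancel₀ hr; linear_combination -e10
    · change g 0 1 = - (δ * g 1 0)
      apply mul_right_cancel₀ hr; linear_combination -e00

end Specific

section NonsplitCore

variable {ℓ : ℕ} [Fact ℓ.Prime]

lemma commute_conj_of_neg {h s : GL2 ℓ} (e : h * s = -(s * h)) : Commute (h * s * h⁻¹) s := by
  rw [e]
  have : -(s * h) * h⁻¹ = -s := by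
    rw [neg_mul, mul_assoc, mul_inv_cancel, mul_one]
  rw [this]
  exact (Commute.refl s).neg_left

lemma commute_conj_of_comm {h s : GL2 ℓ} (e : h * s = s * h) : Commute (h * s * h⁻¹) s := by
  rw [e, mul_assoc, mul_inv_cancel, mul_one]

lemma cns_shape (hℓ : ℓ ≠ 2) (δ : ZMod ℓ) (hδ : ¬ IsSquare δ) (h : GL2 ℓ)
    (hl : ∃ x : GL2 ℓ, InNsp (x * h * x⁻¹)) (hc : InCns δ h) : h 0 0 = 0 ∨ h 1 0 = 0 := by
  have h2 := two_ne_zero_zmod hℓ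
  obtain ⟨h1, h3⟩ := hc
  change h 1 1 = h 0 0 at h1
  change h 0 1 = δ * h 1 0 at h3
  rcases diag_or_nonsplit hℓ h hl with ⟨x, h01, h10⟩ | ⟨ht, -⟩
  · right
    by_contra hs
    apply hδ
    have ht := conj_trace x h
    have hd := conj_det x h
    generalize x * h * x⁻¹ = y at *
    rw [h01, h10, h1, h3] at hd
    rw [h1] at ht
    refine ⟨(y 0 0 - y 1 1) / (2 * h 1 0), ?_⟩
    field_simp
    linear_combination 4 * hd - (y 0 0 + y 1 1 + 2 * h 0 0) * ht
  · left
    rw [h1] at ht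
    apply (mul_eq_zero.1 (?_ : 2 * h 0 0 = 0)).resolve_left h2
    linear_combination ht

lemma nns_core_aux (hℓ : ℓ ≠ 2) (δ : ZMod ℓ) (hδ : ¬ IsSquare δ)
    (G : Subgroup (GL2 ℓ)) (hloc : ∀ g ∈ G, ∃ x : GL2 ℓ, InNsp (x * g * x⁻¹))
    (hns : ∀ g ∈ G, InNns δ g) (s : GL2 ℓ) (hs : s ∈ G) (ha : InNnsAnti δ s)
    (hsq : IsSquare (-(s 0 0 * s 1 1 - s 0 1 * s 1 0))) :
    ∃ x : GL2 ℓ, ∀ g ∈ G, InNsp (x * g * x⁻¹) := by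
  have h2 := two_ne_zero_zmod hℓ
  have hd := gl_det_ne s
  obtain ⟨s1, s2⟩ := ha
  change s 1 1 = - s 0 0 at s1
  change s 0 1 = - (δ * s 1 0) at s2
  obtain ⟨t, ht⟩ := hsq
  have ht0 : t ≠ 0 := by
    rintro rfl
    apply hd
    linear_combination -ht
  apply split_pair G s
  · intro hc
    obtain ⟨c1, c2, c3⟩ := (gl_center_iff s).1 hc
    have : s 0 0 = 0 := by
      apply (mul_eq_zero.1 (?_ : 2 * s 0 0 = 0)).resolve_left h2
      linear_combination c3 + s1
    apply hd
    rw [this, c1]; ring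
  · apply exists_conj_diag s t (-t)
    · intro h
      have : 2 * t = 0 := by linear_combination h
      exact (mul_ne_zero h2 ht0) this
    · rw [s1]; ring
    · linear_combination -ht
  · intro h hh
    rcases hns h hh with hc | hc
    · have hsh := cns_shape hℓ δ hδ h (hloc h hh) hc
      obtain ⟨h1, h3⟩ := hc
      change h 1 1 = h 0 0 at h1
      change h 0 1 = δ * h 1 0 at h3
      rcases hsh with h0 | h0
      · apply commute_conj_of_neg
        apply gl_ext4
        · change _ = -((s * h) 0 0)
          rw [gl_mul00, gl_mul00, h0, h3, s2]; ring
        · change _ = -((s * h) 0 1)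
          rw [gl_mul01, gl_mul01, h1, h0, h3, s1]; ring
        · change _ = -((s * h) 1 0)
          rw [gl_mul10, gl_mul10, h1, h0, s1]; ring
        · change _ = -((s * h) 1 1)
          rw [gl_mul11, gl_mul11, h1, h0, h3, s2]; ring
      · apply commute_conj_of_comm
        have : h ∈ Subgroup.center (GL2 ℓ) := by
          rw [gl_center_iff, h3, h0, h1]; simp
        exact (Subgroup.mem_center_iff.1 this s).symm
    · have hsl := hloc (h * s) (G.mul_mem hh hs)
      obtain ⟨h1, h3⟩ := hc
      change h 1 1 = -h 0 0 at h1
      change h 0 1 = -(δ * h 1 0) at h3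
      have hsh := cns_shape hℓ δ hδ (h * s) hsl ⟨by
        change (h * s) 1 1 = (h * s) 0 0
        rw [gl_mul00, gl_mul11, h1, h3, s1, s2]; ring, by
        change (h * s) 0 1 = δ * (h * s) 1 0
        rw [gl_mul01, gl_mul10, h1, h3, s1, s2]; ring⟩
      rw [gl_mul00, gl_mul10, h1, h3] at hsh
      rcases hsh with h0 | h0
      · apply commute_conj_of_neg
        apply gl_ext4
        · change _ = -((s * h) 0 0)
          rw [gl_mul00, gl_mul00, h3, s2]; linear_combination 2 * h0
        · change _ = -((s * h) 0 1)
          rw [gl_mul01, gl_mul01, h1, h3, s1, s2]; ring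
        · change _ = -((s * h) 1 0)
          rw [gl_mul10, gl_mul10, h1, s1]; ring
        · change _ = -((s * h) 1 1)
          rw [gl_mul11, gl_mul11, h1, h3, s1, s2]; linear_combination 2 * h0
      · apply commute_conj_of_comm
        apply gl_ext4
        · rw [gl_mul00, gl_mul00, h3, s2]; ring
        · rw [gl_mul01, gl_mul01, h1, h3, s1, s2]; linear_combination 2 * δ * h0
        · rw [gl_mul10, gl_mul10, h1, s1]; linear_combination 2 * h0
        · rw [gl_mul11, gl_mul11, h1, h3, s1, s2]; ring

lemma nns_core (hℓ : ℓ ≠ 2) (δ r : ZMod ℓ) (hδ : ¬ IsSquare δ) (hr : r ≠ 0)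
    (hneg : IsSquare (-1 : ZMod ℓ))
    (G : Subgroup (GL2 ℓ)) (hloc : ∀ g ∈ G, ∃ x : GL2 ℓ, InNsp (x * g * x⁻¹))
    (hns : ∀ g ∈ G, InNns δ g) (m : GL2 ℓ) (hm : m ∈ G)
    (h00 : m 0 0 = 0) (h01 : m 0 1 = δ * r) (h10 : m 1 0 = r) (h11 : m 1 1 = 0) :
    ∃ x : GL2 ℓ, ∀ g ∈ G, InNsp (x * g * x⁻¹) := by
  by_cases hall : ∀ g ∈ G, InCns δ g
  · refine ⟨1, fun g hg => ?_⟩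
    rw [one_mul, inv_one, mul_one]
    have hc := hall g hg
    have hsh := cns_shape hℓ δ hδ g (hloc g hg) hc
    obtain ⟨h1, h3⟩ := hc
    change g 1 1 = g 0 0 at h1
    change g 0 1 = δ * g 1 0 at h3
    rcases hsh with h0 | h0
    · exact Or.inr ⟨h0, by change g 1 1 = 0; rw [h1, h0]⟩
    · exact Or.inl ⟨by change g 0 1 = 0; rw [h3, h0, mul_zero], h0⟩
  · push Not at hall
    obtain ⟨g, hg, hgc⟩ := hall
    have ha := (hns g hg).resolve_left hgc
    by_cases hsq : IsSquare (-(g 0 0 * g 1 1 - g 0 1 * g 1 0))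
    · exact nns_core_aux hℓ δ hδ G hloc hns g hg ha hsq
    · obtain ⟨s1, s2⟩ := ha
      change g 1 1 = - g 0 0 at s1
      change g 0 1 = - (δ * g 1 0) at s2
      refine nns_core_aux hℓ δ hδ G hloc hns (g * m) (G.mul_mem hg hm) ⟨?_, ?_⟩ ?_
      · change (g * m) 1 1 = -(g * m) 0 0
        rw [gl_mul00, gl_mul11, h00, h01, h10, h11, s1, s2]; ring
      · change (g * m) 0 1 = -(δ * (g * m) 1 0)
        rw [gl_mul01, gl_mul10, h00, h01, h10, h11, s1]; ring
      · have h := (mul_nonsquare hδ hsq).mul (hneg.mul (⟨r, rfl⟩ : IsSquare (r * r)))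
        have e : -((g * m) 0 0 * (g * m) 1 1 - (g * m) 0 1 * (g * m) 1 0) =
            δ * -(g 0 0 * g 1 1 - g 0 1 * g 1 0) * (-1 * (r * r)) := by
          rw [gl_mul00, gl_mul01, gl_mul10, gl_mul11, h00, h01, h10, h11, s1, s2]; ring
        rw [e]
        exact h

lemma final_pair (hℓ : ℓ ≠ 2) (δ : ZMod ℓ) (hδ : ¬ IsSquare δ)
    (G : Subgroup (GL2 ℓ)) (hloc : ∀ g ∈ G, ∃ x : GL2 ℓ, InNsp (x * g * x⁻¹))
    (m : GL2 ℓ) (hm : m ∈ G) (hmc : m ∉ Subgroup.center (GL2 ℓ))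
    (hc : ∀ g ∈ G, Commute (g * m * g⁻¹) m) :
    (∃ x : GL2 ℓ, ∀ g ∈ G, InNsp (x * g * x⁻¹)) ∨
    ((∃ x : GL2 ℓ, ∀ g ∈ G, InNns δ (x * g * x⁻¹)) ∧ ℓ % 4 = 3) := by
  rcases diag_or_nonsplit hℓ m (hloc m hm) with hd | ⟨ht, hd⟩
  · exact Or.inl (split_pair G m hmc hd hc)
  have hδ0 : δ ≠ 0 := by rintro rfl; simp at hδ
  obtain ⟨q, hq⟩ := mul_nonsquare hδ hd
  have hdet := gl_det_ne m
  have hq0 : q ≠ 0 := by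
    rintro rfl
    rw [mul_zero] at hq
    rcases mul_eq_zero.1 hq with h | h
    · exact hδ0 h
    · exact hdet (neg_eq_zero.1 h)
  obtain ⟨r, hr⟩ : ∃ r, r = q / δ := ⟨_, rfl⟩
  have hr0 : r ≠ 0 := by rw [hr]; exact div_ne_zero hq0 hδ0
  have h11 : m 1 1 = - m 0 0 := by linear_combination ht
  have hrr : m 0 0 ^ 2 + m 0 1 * m 1 0 = δ * r ^ 2 := by
    rw [hr]; field_simp
    rw [h11] at hq
    linear_combination hq
  have hm10 : m 1 0 ≠ 0 := by
    intro h
    apply hd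
    refine ⟨m 0 0, ?_⟩
    rw [h11, h]; ring
  obtain ⟨x, hx⟩ := conj_of_intertwine m !![1, m 0 0 / r; 0, m 1 0 / r] !![0, δ * r; r, 0]
    (by
      rw [Matrix.det_fin_two_of]
      simp [hm10, hr0])
    (by
      ext i j
      fin_cases i <;> fin_cases j <;> simp [Matrix.mul_apply, Fin.sum_univ_two] <;> field_simp <;>
        grind)
  have x00 : (x * m * x⁻¹) 0 0 = 0 := by rw [hx]; simp
  have x01 : (x * m * x⁻¹) 0 1 = δ * r := by rw [hx]; simp
  have x10 : (x * m * x⁻¹) 1 0 = r := by rw [hx]; simp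
  have x11 : (x * m * x⁻¹) 1 1 = 0 := by rw [hx]; simp
  have hns : ∀ g ∈ G, InNns δ (x * g * x⁻¹) := by
    intro g hg
    apply nonsplit_form hℓ δ r hδ hr0 _ _ x00 x01 x10 x11
    have : (x * g * x⁻¹) * (x * m * x⁻¹) * (x * g * x⁻¹)⁻¹ = x * (g * m * g⁻¹) * x⁻¹ := by group
    rw [this]
    exact (Commute.conj_iff x).2 (hc g hg)
  by_cases h43 : ℓ % 4 = 3
  · exact Or.inr ⟨⟨x, hns⟩, h43⟩
  left
  have hneg : IsSquare (-1 : ZMod ℓ) := ZMod.exists_sq_eq_neg_one_iff.2 h43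
  obtain ⟨y, hy⟩ := nns_core hℓ δ r hδ hr0 hneg (G.map (MulAut.conj x).toMonoidHom)
    (by
      rintro _ ⟨g, hg, rfl⟩
      obtain ⟨z, hz⟩ := hloc g hg
      refine ⟨z * x⁻¹, ?_⟩
      convert hz using 1
      simp [mul_assoc])
    (by
      rintro _ ⟨g, hg, rfl⟩
      exact hns g hg)
    (x * m * x⁻¹) ⟨m, hm, rfl⟩ x00 x01 x10 x11
  refine ⟨y * x, fun g hg => ?_⟩
  have := hy (x * g * x⁻¹) ⟨g, hg, rfl⟩
  convert this using 1
  group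

end NonsplitCore

section Congruences

variable {ℓ : ℕ} [Fact ℓ.Prime]

lemma toPGL_eq_one (g : GL2 ℓ) : toPGL ℓ g = 1 ↔ g ∈ Subgroup.center (GL2 ℓ) :=
  QuotientGroup.eq_one_iff g

lemma diag_pow {K : Type*} [Field K] (A : GL (Fin 2) K) (h1 : A 0 1 = 0) (h2 : A 1 0 = 0) (n : ℕ) :
    (A ^ n) 0 1 = 0 ∧ (A ^ n) 1 0 = 0 ∧ (A ^ n) 0 0 = A 0 0 ^ n ∧ (A ^ n) 1 1 = A 1 1 ^ n := by
  induction n with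
  | zero => simp
  | succ k ih =>
    obtain ⟨i1, i2, i3, i4⟩ := ih
    rw [pow_succ, gl_mul00, gl_mul01, gl_mul10, gl_mul11, i1, i2, i3, i4, h1, h2]
    refine ⟨by ring, by ring, by ring, by ring⟩

lemma diag_toPGL_pow (g : GL2 ℓ)
    (h : ∃ x : GL2 ℓ, (x * g * x⁻¹) 0 1 = 0 ∧ (x * g * x⁻¹) 1 0 = 0) :
    toPGL ℓ g ^ (ℓ - 1) = 1 := by
  obtain ⟨x, h1, h2⟩ := h
  rw [← map_pow, toPGL_eq_one]
  apply conj_center (x := x)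
  rw [← conj_pow]
  have hd := gl_det_ne (x * g * x⁻¹)
  generalize x * g * x⁻¹ = A at *
  obtain ⟨i1, i2, i3, i4⟩ := diag_pow A h1 h2 (ℓ - 1)
  rw [h1, zero_mul, sub_zero] at hd
  rw [gl_center_iff, i1, i2, i3, i4, ZMod.pow_card_sub_one_eq_one (left_ne_zero_of_mul hd),
    ZMod.pow_card_sub_one_eq_one (right_ne_zero_of_mul hd)]
  simp

lemma toPGL_order (hℓ : ℓ ≠ 2) (g : GL2 ℓ) (h : ∃ x : GL2 ℓ, InNsp (x * g * x⁻¹))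
    (ho : 2 < orderOf (toPGL ℓ g)) :
    (∃ x : GL2 ℓ, (x * g * x⁻¹) 0 1 = 0 ∧ (x * g * x⁻¹) 1 0 = 0) := by
  refine (diag_or_nonsplit hℓ g h).resolve_right ?_
  rintro ⟨ht, -⟩
  have h2 : toPGL ℓ g ^ 2 = 1 := by
    rw [← map_pow, toPGL_eq_one, pow_two, gl_center_iff, gl_mul00, gl_mul01, gl_mul10, gl_mul11]
    refine ⟨?_, ?_, ?_⟩
    · linear_combination g 0 1 * ht
    · linear_combination g 1 0 * ht
    · linear_combination (g 0 0 - g 1 1) * ht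
  have := orderOf_le_of_pow_eq_one (by norm_num) h2
  omega

lemma order_dvd (hℓ : ℓ ≠ 2) (G : Subgroup (GL2 ℓ))
    (hloc : ∀ g ∈ G, ∃ x : GL2 ℓ, InNsp (x * g * x⁻¹)) {A : Type*} [Group A]
    (e : projImage G ≃* A) (y : A) (hy : 2 < orderOf y) : orderOf y ∣ ℓ - 1 := by
  obtain ⟨g, hg, hgy⟩ := (e.symm y).2
  have h1 : orderOf (toPGL ℓ g) = orderOf y := by
    rw [hgy, Subgroup.orderOf_coe, MulEquiv.orderOf_eq]
  rw [← h1]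
  exact orderOf_dvd_of_pow_eq_one (diag_toPGL_pow g (toPGL_order hℓ g (hloc g hg) (h1 ▸ hy)))

lemma prime_dvd (hℓ : ℓ ≠ 2) (G : Subgroup (GL2 ℓ))
    (hloc : ∀ g ∈ G, ∃ x : GL2 ℓ, InNsp (x * g * x⁻¹)) {A : Type*} [Group A] [Finite A]
    (e : projImage G ≃* A) (p : ℕ) [Fact p.Prime] (hp : 2 < p) (hpA : p ∣ Nat.card A) :
    p ∣ ℓ - 1 := by
  obtain ⟨y, hy⟩ := exists_prime_orderOf_dvd_card' p hpA
  rw [← hy]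
  exact order_dvd hℓ G hloc e y (by omega)

/-- quadratic character of the determinant -/
noncomputable def chi (ℓ : ℕ) [Fact ℓ.Prime] : PGL2 ℓ →* ℤˣ :=
  QuotientGroup.lift _ ((quadraticChar (ZMod ℓ)).toUnitHom.comp Matrix.GeneralLinearGroup.det)
    (by
      intro g hg
      obtain ⟨h1, h2, h3⟩ := (gl_center_iff g).1 hg
      have hd := gl_det_ne g
      apply Units.ext
      rw [MonoidHom.comp_apply, MulChar.coe_toUnitHom]
      change quadraticChar (ZMod ℓ) (Matrix.det (g : Matrix (Fin 2) (Fin 2) (ZMod ℓ))) = 1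
      rw [Matrix.det_fin_two, quadraticChar_one_iff_isSquare hd]
      exact ⟨g 1 1, by rw [h1, h3]; ring⟩)

lemma chi_eq_one (g : GL2 ℓ) :
    chi ℓ (toPGL ℓ g) = 1 ↔ IsSquare (g 0 0 * g 1 1 - g 0 1 * g 1 0) := by
  rw [← quadraticChar_one_iff_isSquare (gl_det_ne g), ← Matrix.det_fin_two, ← Units.val_inj]
  rfl

lemma hom_alternating_trivial {n : ℕ} (f : alternatingGroup (Fin n) →* ℤˣ)
    (y : alternatingGroup (Fin n)) : f y = 1 := by
  have hle : alternatingGroup (Fin n) ≤ f.ker.map (alternatingGroup (Fin n)).subtype := by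
    refine Equiv.Perm.closure_three_cycles_eq_alternating.ge.trans ?_
    rw [Subgroup.closure_le]
    intro σ hσ
    have hσ' : σ.IsThreeCycle := hσ
    refine ⟨⟨σ, hσ'.mem_alternatingGroup⟩, ?_, rfl⟩
    rw [SetLike.mem_coe, MonoidHom.mem_ker]
    have h3 : (⟨σ, hσ'.mem_alternatingGroup⟩ : alternatingGroup (Fin n)) ^ 3 = 1 := by
      apply Subtype.ext
      change σ ^ 3 = 1
      rw [← hσ'.orderOf, pow_orderOf_eq_one]
    generalize (⟨σ, hσ'.mem_alternatingGroup⟩ : alternatingGroup (Fin n)) = z at *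
    have := congrArg f h3
    rw [map_pow, map_one] at this
    rcases Int.units_eq_one_or (f z) with h | h
    · exact h
    · rw [h] at this; exact absurd this (by decide)
  obtain ⟨z, hz, hzy⟩ := hle y.2
  have : z = y := Subtype.ext hzy
  rw [← this]
  exact hz

lemma alternating_mod4 {n : ℕ} (G : Subgroup (GL2 ℓ)) (e : projImage G ≃* alternatingGroup (Fin n))
    (s : GL2 ℓ) (hs : s ∈ G) (hsq : ¬ IsSquare (-(s 0 0 * s 1 1 - s 0 1 * s 1 0))) :
    ℓ % 4 = 3 := by
  by_contra h43
  have hneg : IsSquare (-1 : ZMod ℓ) := ZMod.exists_sq_eq_neg_one_iff.2 h43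
  apply hsq
  have h1 := hom_alternating_trivial (((chi ℓ).comp (projImage G).subtype).comp e.symm.toMonoidHom)
    (e ⟨toPGL ℓ s, ⟨s, hs, rfl⟩⟩)
  have h2 : chi ℓ (toPGL ℓ s) = 1 := by simpa using h1
  have h3 := hneg.mul ((chi_eq_one s).1 h2)
  rwa [neg_one_mul] at h3

lemma case_A4 (hℓ : ℓ ≠ 2) (G : Subgroup (GL2 ℓ))
    (hloc : ∀ g ∈ G, ∃ x : GL2 ℓ, InNsp (x * g * x⁻¹))
    (s : GL2 ℓ) (hs : s ∈ G) (hsq : ¬ IsSquare (-(s 0 0 * s 1 1 - s 0 1 * s 1 0)))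
    (h : IsA4 (projImage G)) : ℓ % 12 = 7 := by
  obtain ⟨e⟩ := h
  have h4 := alternating_mod4 G e s hs hsq
  have hc : Nat.card (alternatingGroup (Fin 4)) = 12 := by
    have := two_mul_nat_card_alternatingGroup (α := Fin 4)
    rw [Nat.card_perm, Nat.card_fin] at this
    simp [Nat.factorial] at this
    simp; omega
  haveI : Fact (Nat.Prime 3) := ⟨Nat.prime_three⟩
  have h3 := prime_dvd hℓ G hloc e 3 (by norm_num) (by rw [hc]; norm_num)
  have := (Fact.out : ℓ.Prime).two_le
  omega

lemma case_A5 (hℓ : ℓ ≠ 2) (G : Subgroup (GL2 ℓ))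
    (hloc : ∀ g ∈ G, ∃ x : GL2 ℓ, InNsp (x * g * x⁻¹))
    (s : GL2 ℓ) (hs : s ∈ G) (hsq : ¬ IsSquare (-(s 0 0 * s 1 1 - s 0 1 * s 1 0)))
    (h : IsA5 (projImage G)) : ℓ % 60 = 31 := by
  obtain ⟨e⟩ := h
  have h4 := alternating_mod4 G e s hs hsq
  have hc : Nat.card (alternatingGroup (Fin 5)) = 60 := by
    have := two_mul_nat_card_alternatingGroup (α := Fin 5)
    rw [Nat.card_perm, Nat.card_fin] at this
    simp [Nat.factorial] at this
    simp; omega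
  haveI : Fact (Nat.Prime 3) := ⟨Nat.prime_three⟩
  haveI : Fact (Nat.Prime 5) := ⟨Nat.prime_five⟩
  have h3 := prime_dvd hℓ G hloc e 3 (by norm_num) (by rw [hc]; norm_num)
  have h5 := prime_dvd hℓ G hloc e 5 (by norm_num) (by rw [hc]; norm_num)
  have := (Fact.out : ℓ.Prime).two_le
  omega

lemma case_S4 (hℓ : ℓ ≠ 2) (G : Subgroup (GL2 ℓ))
    (hloc : ∀ g ∈ G, ∃ x : GL2 ℓ, InNsp (x * g * x⁻¹))
    (s : GL2 ℓ) (hs : s ∈ G) (hsq : ¬ IsSquare (-(s 0 0 * s 1 1 - s 0 1 * s 1 0)))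
    (h : IsS4 (projImage G)) : ℓ % 24 = 13 := by
  obtain ⟨e⟩ := h
  have hp := (Fact.out : ℓ.Prime).two_le
  have hc : Nat.card (Equiv.Perm (Fin 4)) = 24 := by
    rw [Nat.card_perm, Nat.card_fin]; rfl
  haveI : Fact (Nat.Prime 3) := ⟨Nat.prime_three⟩
  have h3 := prime_dvd hℓ G hloc e 3 (by norm_num) (by rw [hc]; norm_num)
  have ho : orderOf (finRotate 4) = 4 := by
    rw [orderOf_eq_iff (by norm_num)]
    decide
  have h4 := order_dvd hℓ G hloc e (finRotate 4) (by rw [ho]; norm_num)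
  rw [ho] at h4
  have hneg : IsSquare (-1 : ZMod ℓ) := ZMod.exists_sq_eq_neg_one_iff.2 (by omega)
  have hs1 : chi ℓ (toPGL ℓ s) = -1 := by
    rcases Int.units_eq_one_or (chi ℓ (toPGL ℓ s)) with h | h
    · exfalso
      have h3 := hneg.mul ((chi_eq_one s).1 h)
      rw [neg_one_mul] at h3
      exact hsq h3
    · exact h
  set f : Equiv.Perm (Fin 4) →* ℤˣ :=
    ((chi ℓ).comp (projImage G).subtype).comp e.symm.toMonoidHom with hf
  have hsurj : Function.Surjective f := by
    intro u
    rcases Int.units_eq_one_or u with h | h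
    · exact ⟨1, by rw [h, map_one]⟩
    · refine ⟨e ⟨toPGL ℓ s, ⟨s, hs, rfl⟩⟩, ?_⟩
      rw [h, ← hs1]
      simp [hf]
  have hsign := Equiv.Perm.eq_sign_of_surjective_hom hsurj
  have hrot : f (finRotate 4) = -1 := by
    rw [hsign]; decide
  obtain ⟨g, hg, hgy⟩ := (e.symm (finRotate 4)).2
  have hgy' : toPGL ℓ g = (e.symm (finRotate 4) : PGL2 ℓ) := hgy
  have hord : orderOf (toPGL ℓ g) = 4 := by
    rw [hgy', Subgroup.orderOf_coe, MulEquiv.orderOf_eq, ho]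
  have hchi : chi ℓ (toPGL ℓ g) = -1 := by
    rw [hgy', ← hrot]; rfl
  obtain ⟨x, h1, h2⟩ := toPGL_order hℓ g (hloc g hg) (by rw [hord]; norm_num)
  have hns : ¬ IsSquare (g 0 0 * g 1 1 - g 0 1 * g 1 0) := by
    rw [← chi_eq_one, hchi]; decide
  rw [← conj_det x g] at hns
  have hpow : toPGL ℓ g ^ 4 = 1 := by rw [← hord, pow_orderOf_eq_one]
  rw [← map_pow, toPGL_eq_one] at hpow
  have hpow' : (x * g * x⁻¹) ^ 4 ∈ Subgroup.center (GL2 ℓ) := by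
    rw [conj_pow]
    exact (inferInstance : (Subgroup.center (GL2 ℓ)).Normal).conj_mem _ hpow x
  have hd := gl_det_ne (x * g * x⁻¹)
  generalize x * g * x⁻¹ = A at *
  obtain ⟨i1, i2, i3, i4⟩ := diag_pow A h1 h2 4
  have huv := ((gl_center_iff _).1 hpow').2.2
  rw [i3, i4] at huv
  rw [h1, zero_mul, sub_zero] at hns hd
  have h8 : ¬ 8 ∣ ℓ - 1 := by
    rintro ⟨k, hk⟩
    apply hns
    rw [ZMod.euler_criterion ℓ hd]
    have hu := ZMod.pow_card_sub_one_eq_one (left_ne_zero_of_mul hd)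
    have : ℓ / 2 = 4 * k := by omega
    rw [this, mul_pow, pow_mul (A 1 1), ← huv, ← pow_mul, ← pow_add, ← hu, hk]
    congr 1
    ring
  omega

end Congruences

section Assembly

variable {ℓ : ℕ} [Fact ℓ.Prime]

open MulAction Classical in
/-- the action of `G` on the projective line over the algebraic closure -/
noncomputable def psi (G : Subgroup (GL2 ℓ)) :
    G →* Equiv.Perm (OnePoint (AlgebraicClosure (ZMod ℓ))) :=
  ((MulAction.toPermHom (GL (Fin 2) (AlgebraicClosure (ZMod ℓ)))
    (OnePoint (AlgebraicClosure (ZMod ℓ)))).comp (toK ℓ)).comp G.subtype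

open MulAction Classical in
lemma psi_fixed (G : Subgroup (GL2 ℓ)) (g : G) (y : (psi G).range) (hy : psi G g = y) :
    fixedBy (OnePoint (AlgebraicClosure (ZMod ℓ))) y =
      fixedBy (OnePoint (AlgebraicClosure (ZMod ℓ))) (toK ℓ (g : GL2 ℓ)) := by
  ext p
  rw [mem_fixedBy, mem_fixedBy]
  change (y : Equiv.Perm _) p = p ↔ _
  rw [← hy]
  rfl

open MulAction Classical in
lemma nonscalar_fixed (hℓ : ℓ ≠ 2) (g : GL2 ℓ) (h : ∃ x : GL2 ℓ, InNsp (x * g * x⁻¹))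
    (hg : g ∉ Subgroup.center (GL2 ℓ)) :
    (fixedBy (OnePoint (AlgebraicClosure (ZMod ℓ))) (toK ℓ g)).ncard = 2 := by
  obtain ⟨x, h1, h2, h3⟩ := exists_diag_K hℓ g h hg
  exact fixedBy_ncard _ x h1 h2 h3

lemma psi_eq_one (hℓ : ℓ ≠ 2) (G : Subgroup (GL2 ℓ))
    (hloc : ∀ g ∈ G, ∃ x : GL2 ℓ, InNsp (x * g * x⁻¹)) (g : G) :
    psi G g = 1 ↔ (g : GL2 ℓ) ∈ Subgroup.center (GL2 ℓ) := by
  classical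
  constructor
  · intro h
    by_contra hg
    have h2 := nonscalar_fixed hℓ g (hloc g g.2) hg
    rw [← psi_fixed G g 1 h] at h2
    have : MulAction.fixedBy (OnePoint (AlgebraicClosure (ZMod ℓ))) (1 : (psi G).range) =
      Set.univ := by
      ext p; simp
    rw [this, Set.ncard_univ] at h2
    haveI : Infinite (AlgebraicClosure (ZMod ℓ)) := IsAlgClosed.instInfinite
    haveI : Infinite (OnePoint (AlgebraicClosure (ZMod ℓ))) :=
      Infinite.of_injective _ (OnePoint.coe_injective (X := AlgebraicClosure (ZMod ℓ)))
    rw [Nat.card_eq_zero_of_infinite] at h2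
    omega
  · intro h
    ext p
    have hc : toK ℓ (g : GL2 ℓ) ∈ Subgroup.center _ := by
      rw [gl_center_iff] at h ⊢
      simp only [toK_apply, h.1, h.2.1, h.2.2, map_zero, and_self]
    have := center_smul _ hc p
    change toK ℓ (g : GL2 ℓ) • p = p
    convert this

lemma proj_equiv (hℓ : ℓ ≠ 2) (G : Subgroup (GL2 ℓ))
    (hloc : ∀ g ∈ G, ∃ x : GL2 ℓ, InNsp (x * g * x⁻¹)) :
    Nonempty ((projImage G) ≃* (psi G).range) := by
  have hk : ((toPGL ℓ).comp G.subtype).ker = (psi G).ker := by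
    ext g
    rw [MonoidHom.mem_ker, MonoidHom.mem_ker, psi_eq_one hℓ G hloc]
    exact toPGL_eq_one _
  have hr : ((toPGL ℓ).comp G.subtype).range = projImage G := by
    rw [MonoidHom.range_comp, Subgroup.range_subtype]; rfl
  exact ⟨(MulEquiv.subgroupCongr hr.symm).trans
    ((QuotientGroup.quotientKerEquivRange _).symm.trans
      ((QuotientGroup.quotientMulEquivOfEq hk).trans (QuotientGroup.quotientKerEquivRange _)))⟩

end Assembly

/-- If every element of `G ≤ GL₂(F_ℓ)` lies in a conjugate of `N_sp` but
some element is not diagonalizable, then `G` is contained in a conjugate of `N_sp`, or in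
a conjugate of `N_ns` with `ℓ ≡ 3 (mod 4)`, or its projective image is exceptional with
the stated congruence on `ℓ`. -/
theorem local_global_normalizer_split_cartan
    {ℓ : ℕ} [Fact ℓ.Prime] (hℓ : ℓ ≠ 2) (δ : ZMod ℓ) (hδ : ¬ IsSquare δ)
    (G : Subgroup (GL2 ℓ))
    (hloc : ∀ g ∈ G, ∃ x : GL2 ℓ, InNsp (x * g * x⁻¹))
    (hnd : ∃ g ∈ G, ¬ ∃ x : GL2 ℓ, IsDiag (x * g * x⁻¹)) :
    (∃ x : GL2 ℓ, ∀ g ∈ G, InNsp (x * g * x⁻¹)) ∨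
    ((∃ x : GL2 ℓ, ∀ g ∈ G, InNns δ (x * g * x⁻¹)) ∧ ℓ % 4 = 3) ∨
    (IsA4 (projImage G) ∧ ℓ % 12 = 7) ∨
    (IsS4 (projImage G) ∧ ℓ % 24 = 13) ∨
    (IsA5 (projImage G) ∧ ℓ % 60 = 31) := by 
  classical
  obtain ⟨s, hs, hsd⟩ := hnd
  have hsq : ¬ IsSquare (-(s 0 0 * s 1 1 - s 0 1 * s 1 0)) :=
    ((diag_or_nonsplit hℓ s (hloc s hs)).resolve_left hsd).2
  have hsc : s ∉ Subgroup.center (GL2 ℓ) := by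
    intro h
    obtain ⟨h1, h2, -⟩ := (gl_center_iff s).1 h
    apply hsd
    refine ⟨1, ?_⟩
    rw [one_mul, inv_one, mul_one]
    exact ⟨h1, h2⟩
  have : Finite (GL2 ℓ) := inferInstance
  have hfin : Finite (psi G).range := inferInstance
  have hnt : Nontrivial (psi G).range := by
    refine ⟨⟨psi G ⟨s, hs⟩, ⟨_, rfl⟩⟩, 1, fun h => hsc ?_⟩
    exact (psi_eq_one hℓ G hloc ⟨s, hs⟩).1 (congrArg Subtype.val h)
  have hne : ∀ (y : (psi G).range) (g : G), y ≠ 1 → psi G g = y →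
      (g : GL2 ℓ) ∉ Subgroup.center (GL2 ℓ) := by
    intro y g hy hgy hc
    apply hy
    apply Subtype.ext
    rw [← hgy, (psi_eq_one hℓ G hloc g).2 hc]
    rfl
  have h2 : ∀ y : (psi G).range, y ≠ 1 →
      (MulAction.fixedBy (OnePoint (AlgebraicClosure (ZMod ℓ))) y).ncard = 2 := by
    intro y hy
    obtain ⟨g, hg⟩ := y.2
    rw [psi_fixed G g y hg]
    exact nonscalar_fixed hℓ g (hloc g g.2) (hne y g hy hg)
  obtain ⟨e⟩ := proj_equiv hℓ G hloc
  rcases classify' h2 with hp | ⟨⟨f⟩⟩ | ⟨⟨f⟩⟩ | ⟨⟨f⟩⟩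
  · obtain ⟨y, hy1, hy⟩ := hp
    obtain ⟨m, hm⟩ := y.2
    have hmc := hne y m hy1 hm
    have hcomm : ∀ g ∈ G, Commute (g * m * g⁻¹) (m : GL2 ℓ) := by
      intro g hg
      have h := hy ⟨psi G ⟨g, hg⟩, ⟨_, rfl⟩⟩
      rw [psi_fixed G m y hm, psi_fixed G (⟨g, hg⟩ * m * ⟨g, hg⟩⁻¹) _
        (by rw [map_mul, map_mul, map_inv, hm]; rfl)] at h
      obtain ⟨x, x1, x2, x3⟩ := exists_diag_K hℓ m (hloc m m.2) hmc
      have hK := commute_of_fixedBy _ _ x x1 x2 x3 h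
      apply toK_injective
      rw [map_mul (toK ℓ) (g * m * g⁻¹) m, map_mul (toK ℓ) (m : GL2 ℓ) (g * m * g⁻¹)]
      exact hK
    rcases final_pair hℓ δ hδ G hloc m m.2 hmc hcomm with h | h
    · exact Or.inl h
    · exact Or.inr (Or.inl h)
  · have h : IsA4 (projImage G) := ⟨e.trans f⟩
    exact Or.inr (Or.inr (Or.inl ⟨h, case_A4 hℓ G hloc s hs hsq h⟩))
  · have h : IsS4 (projImage G) := ⟨e.trans f⟩
    exact Or.inr (Or.inr (Or.inr (Or.inl ⟨h, case_S4 hℓ G hloc s hs hsq h⟩)))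
  · have h : IsA5 (projImage G) := ⟨e.trans f⟩
    exact Or.inr (Or.inr (Or.inr (Or.inr ⟨h, case_A5 hℓ G hloc s hs hsq h⟩)))
end
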